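/- Let ζ denote the Riemann zeta function and suppose ρ = β + iγ is a zero of ζ with β > 7/8. Let δ be the unique real number with −π < δ ≤ π such that γ·log 2 = 2πn + δ for some integer n, and suppose |δ| > π/100. Then for every real primitive Dirichlet character χ modulo D with D ≡ 0 (mod 4) and D > 10^9, the Dirichlet L-function satisfies L(1,χ) > 1/(5400 · U^{12(1−β)} · (log U)^3), where U = |ρ|·D^{1/4}·log D. -/

import Mathlib

open Complex

/-!
Let `h` be the Dirichlet inverse of `r = 1 * χ`. For a real character `|h| ≤ r`, and
`∑_{n ≤ x} (h * r)(n) n^{-ρ} = 1`. Split this sum by the hyperbola method. Since `r` has average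
`L(1, χ)` and `ζ(ρ) L(ρ, χ) = 0`, the partial sums of `r(n) n^{-ρ}` have size about
`L(1, χ) y^{1 - β}`, and those of `h(n) n^{-ρ}` over `n > z` are dominated by the sums of
`r(n) n^{-β}`, again about `L(1, χ) x^{1 - β}`. Hence, up to logarithms,
`1 ≪ L(1, χ) x^{1 - β} + |ρ| D x^{1/2 - β}`; for `x = U ^ 12` the second term is negligible.
-/

open Filter Topology MeasureTheory Asymptotics ArithmeticFunction

/-! ### Complex powers and the zeta function -/

lemma norm_cpow_neg_sub_cpow_neg_le {s : ℂ} {K a b : ℝ} (hK : ‖s‖ ≤ K * s.re) (ha : 0 < a)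
    (hab : a ≤ b) :
    ‖(b : ℂ) ^ (-s) - (a : ℂ) ^ (-s)‖ ≤ K * (a ^ (-s.re) - b ^ (-s.re)) := by
  have hpos {t : ℝ} (ht : a ≤ t) : 0 < t := ha.trans_le ht
  have hf {t : ℝ} (ht : a ≤ t) : HasDerivAt (fun t : ℝ ↦ (t : ℂ) ^ (-s) - (a : ℂ) ^ (-s))
      (-s * (t : ℂ) ^ (-s - 1)) t := by
    have h := (hasDerivAt_id (t : ℂ)).cpow_const (c := -s) (Or.inl (by simpa using hpos ht))
    simpa using! h.comp_ofReal.sub_const ((a : ℂ) ^ (-s))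
  have hB {t : ℝ} (ht : a ≤ t) : HasDerivAt (fun t : ℝ ↦ K * (a ^ (-s.re) - t ^ (-s.re)))
      (K * s.re * t ^ (-s.re - 1)) t := by
    refine (((Real.hasDerivAt_rpow_const (p := -s.re) (Or.inl (hpos ht).ne')).const_sub
      (a ^ (-s.re))).const_mul K).congr_deriv (by ring)
  refine image_norm_le_of_norm_deriv_right_le_deriv_boundary'
    (fun t ht ↦ (hf ht.1).continuousAt.continuousWithinAt) (fun t ht ↦ (hf ht.1).hasDerivWithinAt)
    (by simp) (fun t ht ↦ (hB ht.1).continuousAt.continuousWithinAt)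
    (fun t ht ↦ (hB ht.1).hasDerivWithinAt) (fun t ht ↦ ?_) ⟨hab, le_rfl⟩
  rw [norm_mul, norm_neg, norm_cpow_eq_rpow_re_of_pos (hpos ht.1), sub_re, neg_re, one_re]
  exact mul_le_mul_of_nonneg_right hK (Real.rpow_nonneg (hpos ht.1).le _)

/-- The integral `∫_u^∞ ({t} - {u}) t^(-s-1) dt`, which is `s⁻¹` times the error made when the
zeta series is cut off at `u`. The difference of fractional parts, rather than `{t}` itself, spares
a boundary term. -/
noncomputable def zetaRemainder (u : ℝ) (s : ℂ) : ℂ :=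
  ∫ t in Set.Ioi u, ((Int.fract t - Int.fract u : ℝ) : ℂ) * (t : ℂ) ^ (-(s + 1))

lemma abs_fract_sub_fract_le_one (t u : ℝ) : |Int.fract t - Int.fract u| ≤ 1 :=
  abs_le.2 ⟨by linarith [Int.fract_nonneg t, Int.fract_lt_one u],
    by linarith [Int.fract_lt_one t, Int.fract_nonneg u]⟩

lemma norm_zetaRemainder_le {u : ℝ} (hu : 0 < u) {s : ℂ} (hs : 0 < s.re) :
    ‖zetaRemainder u s‖ ≤ u ^ (-s.re) / s.re := by
  have hint : IntegrableOn (fun t : ℝ ↦ t ^ (-s.re - 1)) (Set.Ioi u) :=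
    integrableOn_Ioi_rpow_of_lt (by linarith) hu
  calc ‖zetaRemainder u s‖ ≤ ∫ t in Set.Ioi u, t ^ (-s.re - 1) := by
        refine norm_integral_le_of_norm_le hint ((ae_restrict_iff' measurableSet_Ioi).2 (.of_forall
          fun t ht ↦ ?_))
        rw [norm_mul, norm_real, Real.norm_eq_abs,
          norm_cpow_eq_rpow_re_of_pos (hu.trans ht), neg_re, add_re, one_re, neg_add']
        exact mul_le_of_le_one_left (Real.rpow_nonneg (hu.trans ht).le _)
          (abs_fract_sub_fract_le_one t u)
    _ = u ^ (-s.re) / s.re := by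
        rw [integral_Ioi_rpow_of_lt (by linarith) hu, sub_add_cancel, neg_div_neg_eq]

lemma differentiableAt_zetaRemainder {u : ℝ} (hu : 0 < u) {s : ℂ} (hs : 0 < s.re) :
    DifferentiableAt ℂ (zetaRemainder u) s := by
  set f : ℝ → ℂ := (Set.Ioi u).indicator fun t ↦ ((Int.fract t - Int.fract u : ℝ) : ℂ)
  have hfm : Measurable f := by
    refine Measurable.indicator ?_ measurableSet_Ioi
    exact measurable_ofReal.comp (measurable_fract.sub_const _)
  have hf1 (t : ℝ) : ‖f t‖ ≤ 1 := by
    refine norm_indicator_le_norm_self _ _ |>.trans ?_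
    rw [norm_real]
    exact abs_fract_sub_fract_le_one t u
  have hmellin : zetaRemainder u = fun s ↦ mellin f (-s) := by
    funext s
    rw [mellin, zetaRemainder, ← Set.inter_eq_right.2 (Set.Ioi_subset_Ioi hu.le),
      ← setIntegral_indicator measurableSet_Ioi]
    refine setIntegral_congr_fun measurableSet_Ioi fun t _ ↦ ?_
    by_cases ht : t ∈ Set.Ioi u
    · simp only [f, Set.indicator_of_mem ht, neg_add', smul_eq_mul, mul_comm]
    · simp only [f, Set.indicator_of_notMem ht, smul_zero]
  rw [hmellin]
  refine DifferentiableAt.comp s (g := mellin f) (f := fun s ↦ -s) ?_ differentiableAt_id.neg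
  refine mellin_differentiableAt_of_isBigO_rpow (a := 0) (b := -s.re - 1) ?_ ?_ (by simpa using hs)
    ?_ (by simp)
  · exact ((locallyIntegrable_const (1 : ℝ)).mono hfm.aestronglyMeasurable
      (.of_forall fun t ↦ by simpa using hf1 t)).locallyIntegrableOn _
  · exact IsBigO.of_bound 1 (.of_forall fun t ↦ by simpa using hf1 t)
  · refine IsBigO.of_bound 1 ?_
    filter_upwards [Ioo_mem_nhdsGT hu] with t ht
    simp only [f, Set.indicator_of_notMem (Set.notMem_Ioi.2 ht.2.le), norm_zero]
    positivity

lemma riemannZeta_sub_sum_eq_integral {s : ℂ} (hs : 1 < s.re) (N : ℕ) :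
    riemannZeta s - ∑ n ∈ Finset.Ioc 0 N, (n : ℂ) ^ (-s) =
      s * ∫ t in Set.Ioi (1 : ℝ), ((⌊t⌋₊ - N : ℕ) : ℂ) * (t : ℂ) ^ (-(s + 1)) := by
  set f : ℕ → ℂ := fun n ↦ if n ≤ N then 0 else 1
  have hsum (m : ℕ) : ∑ k ∈ Finset.Icc 1 m, f k = ((m - N : ℕ) : ℂ) := by
    have : (Finset.Icc 1 m).filter (¬ · ≤ N) = Finset.Ioc N m := by grind
    simp only [f, Finset.sum_ite, Finset.sum_const_zero, zero_add, this, Finset.sum_const,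
      Nat.card_Ioc, nsmul_eq_mul, mul_one]
  have hf : LSeriesHasSum f s (riemannZeta s - ∑ n ∈ Finset.Ioc 0 N, (n : ℂ) ^ (-s)) := by
    have hhead : HasSum (fun n : ℕ ↦ if n ∈ Finset.Ioc 0 N then (n : ℂ) ^ (-s) else 0)
        (∑ n ∈ Finset.Ioc 0 N, (n : ℂ) ^ (-s)) := by
      rw [← Finset.sum_congr rfl fun n hn ↦ if_pos hn]
      exact hasSum_sum_of_ne_finset_zero fun n hn ↦ if_neg hn
    refine (HasSum.sub (LSeriesHasSum_one hs) hhead).congr_fun fun n ↦ ?_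
    rcases eq_or_ne n 0 with rfl | hn
    · simp
    · by_cases hnN : n ≤ N <;>
        simp [f, hn, hnN, LSeries.term_of_ne_zero, cpow_neg, Nat.pos_of_ne_zero]
  have hO : (fun n ↦ ∑ k ∈ Finset.Icc 1 n, f k) =O[atTop] fun n ↦ (n : ℝ) ^ (1 : ℝ) := by
    refine IsBigO.of_bound 1 (.of_forall fun n ↦ ?_)
    rw [hsum, Real.rpow_one, RCLike.norm_natCast, RCLike.norm_natCast, one_mul]
    exact_mod_cast n.sub_le N
  simpa only [hf.LSeries_eq, hsum] using
    LSeries_eq_mul_integral f zero_le_one hs hf.LSeriesSummable hO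

lemma integral_Ioi_sub_mul_cpow {s : ℂ} (hs : 1 < s.re) {u : ℝ} (hu : 0 < u) :
    IntegrableOn (fun t : ℝ ↦ ((t : ℂ) - u) * (t : ℂ) ^ (-(s + 1))) (Set.Ioi u) ∧
    s * ∫ t in Set.Ioi u, ((t : ℂ) - u) * (t : ℂ) ^ (-(s + 1)) = (u : ℂ) ^ (1 - s) / (s - 1) := by
  have hs0 : s ≠ 0 := ne_zero_of_re_pos (by linarith)
  have hs1 : s - 1 ≠ 0 := ne_zero_of_re_pos (by simpa using hs)
  have hpow {t : ℝ} (ht : 0 < t) : (t : ℂ) ^ (-s) = t * (t : ℂ) ^ (-(s + 1)) := by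
    have ht0 : (t : ℂ) ≠ 0 := ofReal_ne_zero.2 ht.ne'
    rw [neg_add', cpow_sub _ _ ht0, cpow_one, mul_div_cancel₀ _ ht0]
  have hsplit : Set.EqOn (fun t : ℝ ↦ (t : ℂ) ^ (-s) - u * (t : ℂ) ^ (-(s + 1)))
      (fun t : ℝ ↦ ((t : ℂ) - u) * (t : ℂ) ^ (-(s + 1))) (Set.Ioi u) := fun t ht ↦ by
    simp only [hpow (hu.trans ht), sub_mul]
  have hre : (-s).re < -1 := by simpa using hs
  have hre' : (-(s + 1)).re < -1 := by simp; linarith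
  have h1 : IntegrableOn (fun t : ℝ ↦ (t : ℂ) ^ (-s)) (Set.Ioi u) :=
    integrableOn_Ioi_cpow_of_lt hre hu
  have h2 : IntegrableOn (fun t : ℝ ↦ (u : ℂ) * (t : ℂ) ^ (-(s + 1))) (Set.Ioi u) :=
    (integrableOn_Ioi_cpow_of_lt hre' hu).const_mul _
  refine ⟨(h1.sub h2).congr_fun hsplit measurableSet_Ioi, ?_⟩
  have hu1 : (u : ℂ) ^ (1 - s) = u * (u : ℂ) ^ (-s) := by
    rw [sub_eq_add_neg, cpow_add _ _ (ofReal_ne_zero.2 hu.ne'), cpow_one]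
  rw [← setIntegral_congr_fun measurableSet_Ioi hsplit, integral_sub h1 h2, integral_const_mul,
    integral_Ioi_cpow_of_lt hre hu, integral_Ioi_cpow_of_lt hre' hu, neg_add_eq_sub, hu1,
    show -(s + 1) + 1 = -s by ring]
  have hs2 : 1 - s ≠ 0 := sub_ne_zero.2 (sub_ne_zero.1 hs1).symm
  field_simp
  ring

lemma riemannZeta_sub_sum_eq_zetaRemainder {s : ℂ} (hs : 1 < s.re) {u : ℝ} (hu : 1 ≤ u) :
    riemannZeta s - ∑ n ∈ Finset.Ioc 0 ⌊u⌋₊, (n : ℂ) ^ (-s) =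
      (u : ℂ) ^ (1 - s) / (s - 1) - s * zetaRemainder u s := by
  have hu0 : 0 < u := by linarith
  obtain ⟨hint, hval⟩ := integral_Ioi_sub_mul_cpow hs hu0
  have hrem : IntegrableOn (fun t : ℝ ↦
      ((Int.fract t - Int.fract u : ℝ) : ℂ) * (t : ℂ) ^ (-(s + 1))) (Set.Ioi u) :=
    (integrableOn_Ioi_cpow_of_lt (by simp; linarith) hu0).bdd_mul (c := 1)
      (measurable_ofReal.comp (measurable_fract.sub_const _)).aestronglyMeasurable
      (.of_forall fun t ↦ (norm_real _).trans_le (abs_fract_sub_fract_le_one t u))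
  have hcount {t : ℝ} (ht : u ≤ t) :
      ((⌊t⌋₊ - ⌊u⌋₊ : ℕ) : ℂ) = t - u - ((Int.fract t - Int.fract u : ℝ) : ℂ) := by
    have hfloor {v : ℝ} (hv : 0 ≤ v) : (⌊v⌋₊ : ℝ) = v - Int.fract v := by
      rw [natCast_floor_eq_intCast_floor hv, Int.self_sub_fract]
    rw [Nat.cast_sub (Nat.floor_mono ht), ← ofReal_natCast, ← ofReal_natCast,
      hfloor (hu0.le.trans ht), hfloor hu0.le]
    push_cast
    ring
  rw [riemannZeta_sub_sum_eq_integral hs, ← hval, zetaRemainder, ← mul_sub,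
    ← integral_sub hint hrem, setIntegral_eq_of_subset_of_forall_sdiff_eq_zero measurableSet_Ioi
      (Set.Ioi_subset_Ioi hu) fun t ht ↦ ?_]
  · congr 1
    refine setIntegral_congr_fun measurableSet_Ioi fun t ht ↦ ?_
    simp only [hcount (Set.mem_Ioi.1 ht).le, sub_mul]
  · rw [Nat.sub_eq_zero_of_le (Nat.floor_mono (not_lt.1 ht.2)), Nat.cast_zero, zero_mul]

-- Cleared of their pole, both sides of `riemannZeta_sub_sum_eq_zetaRemainder` are analytic.
lemma sum_cpow_sub_eq_zetaRemainder {s : ℂ} (hs : 0 < s.re) (hs1 : s ≠ 1) {u : ℝ} (hu : 1 ≤ u) :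
    ∑ n ∈ Finset.Ioc 0 ⌊u⌋₊, (n : ℂ) ^ (-s) - (u : ℂ) ^ (1 - s) / (1 - s) - riemannZeta s =
      s * zetaRemainder u s := by
  have hu0 : (u : ℂ) ≠ 0 := ofReal_ne_zero.2 (by linarith)
  set H : Set ℂ := {s | 0 < s.re}
  have hopen : IsOpen H := isOpen_lt continuous_const continuous_re
  set G : ℂ → ℂ := fun s ↦ (s - 1) * (∑ n ∈ Finset.Ioc 0 ⌊u⌋₊, (n : ℂ) ^ (-s) -
    s * zetaRemainder u s) + (u : ℂ) ^ (1 - s)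
  have hG : DifferentiableOn ℂ G H := fun z hz ↦ by
    have hsum : DifferentiableAt ℂ (fun s : ℂ ↦ ∑ n ∈ Finset.Ioc 0 ⌊u⌋₊, (n : ℂ) ^ (-s)) z :=
      DifferentiableAt.fun_sum fun n hn ↦ differentiableAt_id.neg.const_cpow
        (Or.inl (Nat.cast_ne_zero.2 (Finset.mem_Ioc.1 hn).1.ne'))
    have hR := differentiableAt_zetaRemainder (by linarith : 0 < u) hz
    have hpow : DifferentiableAt ℂ (fun s ↦ (u : ℂ) ^ (1 - s)) z :=
      (differentiableAt_id.const_sub 1).const_cpow (Or.inl hu0)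
    exact (((differentiableAt_id.sub_const 1).mul (hsum.sub (differentiableAt_id.mul hR))).add
      hpow).differentiableWithinAt
  have heq : G =ᶠ[𝓝 2] riemannZeta₁ := by
    filter_upwards [(isOpen_lt continuous_const continuous_re).mem_nhds
      (show (1 : ℝ) < re 2 by norm_num)] with z hz
    have hz1 : z - 1 ≠ 0 := ne_zero_of_re_pos (by simpa using hz)
    have h := riemannZeta_sub_sum_eq_zetaRemainder hz hu
    rw [riemannZeta_eq_inv_sub_mul (sub_ne_zero.1 hz1)] at h
    simp only [G]
    field_simp at h
    linear_combination -h
  have hGs : G s = riemannZeta₁ s :=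
    (hG.analyticOnNhd hopen).eqOn_of_preconnected_of_eventuallyEq
      (differentiable_riemannZeta₁.differentiableOn.analyticOnNhd hopen)
      (convex_halfSpace_re_gt 0).isPreconnected (show (2 : ℂ) ∈ H by norm_num [H]) heq hs
  rw [riemannZeta_eq_inv_sub_mul hs1, ← hGs]
  have h1 : s - 1 ≠ 0 := sub_ne_zero.2 hs1
  have h2 : 1 - s ≠ 0 := sub_ne_zero.2 hs1.symm
  simp only [G]
  field_simp
  ring

lemma norm_sum_cpow_sub_le {s : ℂ} (hs : 0 < s.re) (hs1 : s ≠ 1) {u : ℝ} (hu : 1 ≤ u) :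
    ‖∑ n ∈ Finset.Ioc 0 ⌊u⌋₊, (n : ℂ) ^ (-s) - (u : ℂ) ^ (1 - s) / (1 - s) - riemannZeta s‖ ≤
      ‖s‖ / s.re * u ^ (-s.re) := by
  rw [sum_cpow_sub_eq_zetaRemainder hs hs1 hu, norm_mul, div_mul_eq_mul_div, mul_div_assoc]
  exact mul_le_mul_of_nonneg_left (norm_zetaRemainder_le (by linarith) hs) (norm_nonneg s)

lemma re_lt_one_of_riemannZeta_eq_zero {s : ℂ} (hz : riemannZeta s = 0) : s.re < 1 :=
  not_le.1 fun h ↦ riemannZeta_ne_zero_of_one_le_re h hz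

lemma re_le_norm_one_sub_of_riemannZeta_eq_zero {s : ℂ} (hs : 0 < s.re) (hz : riemannZeta s = 0) :
    s.re ≤ ‖1 - s‖ := by
  have hs1 : s ≠ 1 := by rintro rfl; exact riemannZeta_one_ne_zero hz
  have h1 : 1 - s ≠ 0 := sub_ne_zero.2 hs1.symm
  have h := norm_sum_cpow_sub_le hs hs1 le_rfl
  have hid : (1 : ℂ) - 1 / (1 - s) = -s / (1 - s) := by field_simp; ring
  simp only [hz, Nat.floor_one, show Finset.Ioc 0 1 = {1} from rfl, Finset.sum_singleton,
    ofReal_one, Nat.cast_one, one_cpow, sub_zero, Real.one_rpow, mul_one, hid, norm_div,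
    norm_neg] at h
  exact (div_le_div_iff_of_pos_left (norm_pos_iff.2 (ne_zero_of_re_pos hs)) (norm_pos_iff.2 h1)
    hs).1 h

/-! ### Partial summation and the hyperbola method -/

lemma norm_sum_Ioc_mul_le {c w : ℕ → ℂ} {v : ℕ → ℝ} {M : ℝ} {m : ℕ}
    (hc : ∀ n, ‖∑ k ∈ Finset.Ioc m n, c k‖ ≤ M) (hw : ∀ n, m < n → ‖w n‖ ≤ v n)
    (hdiff : ∀ n, m < n → ‖w (n + 1) - w n‖ ≤ v n - v (n + 1)) (n : ℕ) :
    ‖∑ k ∈ Finset.Ioc m n, c k * w k‖ ≤ M * v (m + 1) := by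
  have hM : 0 ≤ M := (norm_nonneg _).trans (hc m)
  rcases lt_or_ge n m with hn | hn
  · rw [Finset.Ioc_eq_empty_of_le hn.le, Finset.sum_empty, norm_zero]
    exact mul_nonneg hM ((norm_nonneg _).trans (hw _ m.lt_succ_self))
  have hsum : ‖∑ k ∈ Finset.Ioc m n, c k * w k - (∑ k ∈ Finset.Ioc m n, c k) * w (n + 1)‖ ≤
      M * (v (m + 1) - v (n + 1)) := by
    induction n, hn using Nat.le_induction with
    | base => simp
    | succ n hmn ih =>
      have hstep : ∑ k ∈ Finset.Ioc m (n + 1), c k * w k -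
          (∑ k ∈ Finset.Ioc m (n + 1), c k) * w (n + 1 + 1) =
          (∑ k ∈ Finset.Ioc m n, c k * w k - (∑ k ∈ Finset.Ioc m n, c k) * w (n + 1)) -
          (∑ k ∈ Finset.Ioc m (n + 1), c k) * (w (n + 1 + 1) - w (n + 1)) := by
        rw [Finset.sum_Ioc_succ_top hmn, Finset.sum_Ioc_succ_top hmn]
        ring
      have hterm : ‖(∑ k ∈ Finset.Ioc m (n + 1), c k) * (w (n + 1 + 1) - w (n + 1))‖ ≤
          M * (v (n + 1) - v (n + 1 + 1)) := by
        rw [norm_mul]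
        exact mul_le_mul (hc _) (hdiff _ (by lia)) (norm_nonneg _) hM
      rw [hstep]
      linarith [norm_sub_le (∑ k ∈ Finset.Ioc m n, c k * w k -
        (∑ k ∈ Finset.Ioc m n, c k) * w (n + 1))
        ((∑ k ∈ Finset.Ioc m (n + 1), c k) * (w (n + 1 + 1) - w (n + 1)))]
  have hlast : ‖(∑ k ∈ Finset.Ioc m n, c k) * w (n + 1)‖ ≤ M * v (n + 1) := by
    rw [norm_mul]
    exact mul_le_mul (hc _) (hw _ (by lia)) (norm_nonneg _) hM
  linarith [norm_le_norm_sub_add (∑ k ∈ Finset.Ioc m n, c k * w k)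
    ((∑ k ∈ Finset.Ioc m n, c k) * w (n + 1))]

lemma norm_natCast_cpow_neg (s : ℂ) {n : ℕ} (hn : 0 < n) :
    ‖(n : ℂ) ^ (-s)‖ = (n : ℝ) ^ (-s.re) := by
  rw [norm_natCast_cpow_of_pos hn, neg_re]

lemma norm_sum_Ioc_mul_cpow_le {c : ℕ → ℂ} {M K : ℝ} {s : ℂ} (hK : 1 ≤ K)
    (hs : ‖s‖ ≤ K * s.re) {x : ℝ} (hx : 0 < x) (hc : ∀ n, ‖∑ k ∈ Finset.Ioc ⌊x⌋₊ n, c k‖ ≤ M)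
    (n : ℕ) :
    ‖∑ k ∈ Finset.Ioc ⌊x⌋₊ n, c k * (k : ℂ) ^ (-s)‖ ≤ M * (K * x ^ (-s.re)) := by
  have hM : 0 ≤ M := (norm_nonneg _).trans (hc 0)
  have hσ : 0 ≤ s.re := nonneg_of_mul_nonneg_right ((norm_nonneg s).trans hs) (by linarith)
  refine (norm_sum_Ioc_mul_le (v := fun n ↦ K * (n : ℝ) ^ (-s.re)) hc (fun n hn ↦ ?_)
    (fun n hn ↦ ?_) n).trans ?_
  · rw [norm_natCast_cpow_neg s (by lia)]
    exact le_mul_of_one_le_left (by positivity) hK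
  · have hn0 : (0 : ℝ) < n := Nat.cast_pos.2 (by lia)
    have h := norm_cpow_neg_sub_cpow_neg_le hs hn0 (by simp : (n : ℝ) ≤ (n + 1 : ℕ))
    rw [← mul_sub]
    exact_mod_cast h
  · have hlt : x ≤ (⌊x⌋₊ + 1 : ℕ) := by exact_mod_cast (Nat.lt_floor_add_one x).le
    gcongr M * (K * ?_)
    exact Real.rpow_le_rpow_of_nonpos hx hlt (by linarith)

lemma floor_mul_lt {A B : ℝ} (hA : 0 ≤ A) (hB : 0 ≤ B) :
    ⌊A * B⌋₊ < (⌊A⌋₊ + 1) * (⌊B⌋₊ + 1) := by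
  rw [Nat.floor_lt (by positivity)]
  push_cast
  exact mul_lt_mul'' (Nat.lt_floor_add_one A) (Nat.lt_floor_add_one B) hA hB

lemma sum_Ioc_mul_eq_hyperbola {R : Type*} [Semiring R] (f g : ArithmeticFunction R) {N A B : ℕ}
    (h : N < (A + 1) * (B + 1)) :
    ∑ n ∈ Finset.Ioc 0 N, (f * g) n =
      ∑ b ∈ Finset.Ioc 0 B, f b * ∑ a ∈ Finset.Ioc 0 (N / b), g a +
        ∑ a ∈ Finset.Ioc 0 A, (∑ b ∈ Finset.Ioc B (N / a), f b) * g a := by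
  have hextend : ∑ b ∈ Finset.Ioc 0 N, f b * ∑ a ∈ Finset.Ioc 0 (N / b), g a =
      ∑ b ∈ Finset.Ioc 0 (max B N), f b * ∑ a ∈ Finset.Ioc 0 (N / b), g a := by
    refine Finset.sum_subset (Finset.Ioc_subset_Ioc_right (le_max_right B N)) fun b hb hbN ↦ ?_
    rw [Nat.div_eq_of_lt (by grind), Finset.Ioc_self, Finset.sum_empty, mul_zero]
  rw [sum_Ioc_mul_eq_sum_sum, hextend, ← Finset.sum_Ioc_consecutive _ B.zero_le (le_max_left B N)]
  congr 1
  simp_rw [Finset.mul_sum, Finset.sum_mul]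
  refine Finset.sum_comm' fun b a ↦ ?_
  simp only [Finset.mem_Ioc]
  constructor
  · rintro ⟨⟨hBb, -⟩, ha, hab⟩
    rw [Nat.le_div_iff_mul_le (by lia)] at hab
    refine ⟨⟨hBb, (Nat.le_div_iff_mul_le ha).2 (by rwa [mul_comm])⟩, ha, ?_⟩
    by_contra! hA
    exact absurd (Nat.mul_le_mul hA hBb) (by lia)
  · rintro ⟨⟨hBb, hab⟩, ha, -⟩
    rw [Nat.le_div_iff_mul_le ha] at hab
    exact ⟨⟨hBb, le_max_of_le_right ((Nat.le_mul_of_pos_right b ha).trans hab)⟩, ha,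
      (Nat.le_div_iff_mul_le (by lia)).2 (by rwa [mul_comm])⟩

lemma sum_norm_mul_le {R : Type*} [NormedRing R] (f g : ArithmeticFunction R) (N : ℕ) :
    ∑ n ∈ Finset.Ioc 0 N, ‖(f * g) n‖ ≤
      (∑ n ∈ Finset.Ioc 0 N, ‖f n‖) * ∑ n ∈ Finset.Ioc 0 N, ‖g n‖ := by
  set F : ArithmeticFunction ℝ := ⟨fun n ↦ ‖f n‖, by simp⟩
  set G : ArithmeticFunction ℝ := ⟨fun n ↦ ‖g n‖, by simp⟩
  calc ∑ n ∈ Finset.Ioc 0 N, ‖(f * g) n‖ ≤ ∑ n ∈ Finset.Ioc 0 N, (F * G) n :=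
        Finset.sum_le_sum fun n _ ↦ by
          rw [mul_apply, mul_apply]
          exact norm_sum_le_of_le _ fun p _ ↦ norm_mul_le _ _
    _ ≤ ∑ p ∈ Finset.Ioc 0 N ×ˢ Finset.Ioc 0 N, F p.1 * G p.2 := by
        rw [sum_Ioc_mul_eq_sum_prod_filter]
        exact Finset.sum_le_sum_of_subset_of_nonneg (Finset.filter_subset _ _)
          fun p _ _ ↦ mul_nonneg (norm_nonneg (f p.1)) (norm_nonneg (g p.2))
    _ = (∑ n ∈ Finset.Ioc 0 N, ‖f n‖) * ∑ n ∈ Finset.Ioc 0 N, ‖g n‖ := by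
        rw [Finset.sum_product, Finset.sum_mul_sum]
        rfl

/-- The arithmetic function `n ↦ f n * n ^ (-s)`, whose partial sums are those of the Dirichlet
series of `f` at `s`. -/
noncomputable def dirichletTwist (s : ℂ) (f : ArithmeticFunction ℂ) : ArithmeticFunction ℂ :=
  ⟨fun n ↦ f n * (n : ℂ) ^ (-s), by simp⟩

lemma dirichletTwist_apply (s : ℂ) (f : ArithmeticFunction ℂ) (n : ℕ) :
    dirichletTwist s f n = f n * (n : ℂ) ^ (-s) := rfl

lemma norm_dirichletTwist (s : ℂ) (f : ArithmeticFunction ℂ) (n : ℕ) :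
    ‖dirichletTwist s f n‖ = ‖f n‖ * (n : ℝ) ^ (-s.re) := by
  rcases n.eq_zero_or_pos with rfl | hn
  · simp
  · rw [dirichletTwist_apply, norm_mul, norm_natCast_cpow_neg s hn]

lemma dirichletTwist_mul (s : ℂ) (f g : ArithmeticFunction ℂ) :
    dirichletTwist s (f * g) = dirichletTwist s f * dirichletTwist s g := by
  ext n
  simp only [dirichletTwist_apply, mul_apply, Finset.sum_mul]
  refine Finset.sum_congr rfl fun p hp ↦ ?_
  rw [← (Nat.mem_divisorsAntidiagonal.1 hp).1, Nat.cast_mul, natCast_mul_natCast_cpow]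
  ring

lemma dirichletTwist_one (s : ℂ) : dirichletTwist s 1 = 1 := by
  ext n
  rcases eq_or_ne n 1 with rfl | hn <;> simp [dirichletTwist_apply, *]

/-! ### Partial sums of a Dirichlet character -/

section Character

variable {D : ℕ} [NeZero D] {χ : DirichletCharacter ℂ D}

lemma sum_range_natCast_add_eq_zero (hχ : χ ≠ 1) (m : ℕ) :
    ∑ n ∈ Finset.range D, χ (n + m : ℕ) = 0 := by
  rw [← MulChar.sum_eq_zero_of_ne_one hχ, ← Equiv.sum_comp (Equiv.addRight (m : ZMod D)) χ]
  refine Finset.sum_nbij' (fun n ↦ (n : ZMod D)) ZMod.val (by simp)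
    (fun a _ ↦ Finset.mem_range.2 a.val_lt) (fun n hn ↦ ?_) (by simp) (by simp)
  exact ZMod.val_cast_of_lt (Finset.mem_range.1 hn)

lemma norm_sum_range_natCast_add_le (hχ : χ ≠ 1) (m N : ℕ) :
    ‖∑ n ∈ Finset.range N, χ (n + m : ℕ)‖ ≤ D := by
  induction N using Nat.strong_induction_on generalizing m with
  | _ N ih =>
  rcases le_or_gt N D with hN | hN
  · calc ‖∑ n ∈ Finset.range N, χ (n + m : ℕ)‖ ≤ ∑ _n ∈ Finset.range N, (1 : ℝ) :=
          norm_sum_le_of_le _ fun n _ ↦ χ.norm_le_one _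
      _ ≤ D := by simpa using hN
  · obtain ⟨k, rfl⟩ := Nat.exists_eq_add_of_lt hN
    rw [add_assoc, Finset.sum_range_add, sum_range_natCast_add_eq_zero hχ, zero_add]
    simpa [add_assoc, add_comm, add_left_comm] using
      ih (k + 1) (by have := NeZero.pos D; lia) (D + m)

lemma norm_sum_Ioc_dirichletCharacter_le (hχ : χ ≠ 1) (m N : ℕ) :
    ‖∑ n ∈ Finset.Ioc m N, χ n‖ ≤ D := by
  have hIoc : Finset.Ioc m N = Finset.Ico (m + 1) (N + 1) := by grind
  rw [hIoc, Finset.sum_Ico_eq_sum_range]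
  simpa [add_comm] using norm_sum_range_natCast_add_le hχ (m + 1) (N + 1 - (m + 1))

lemma norm_sum_sub_LFunction_le_of_one_lt (hχ : χ ≠ 1) {s : ℝ} (hs : 1 < s) {B : ℝ} (hB : 0 < B) :
    ‖DirichletCharacter.LFunction χ s - ∑ n ∈ Finset.Ioc 0 ⌊B⌋₊, χ n * (n : ℂ) ^ (-(s : ℂ))‖ ≤
      D * B ^ (-s) := by
  have hs' : 1 < (s : ℂ).re := by simpa using hs
  have hpartial (N : ℕ) : ∑ n ∈ Finset.range (N + 1), LSeries.term (fun n ↦ χ n) s n =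
      ∑ n ∈ Finset.Ioc 0 N, χ n * (n : ℂ) ^ (-(s : ℂ)) := by
    rw [Nat.range_succ_eq_Icc_zero, ← Finset.add_sum_Ioc_eq_sum_Icc N.zero_le, LSeries.term_zero,
      zero_add]
    refine Finset.sum_congr rfl fun n hn ↦ ?_
    rw [LSeries.term_of_ne_zero (by grind), cpow_neg, div_eq_mul_inv]
  have hlim : Tendsto (fun N : ℕ ↦ ∑ n ∈ Finset.Ioc 0 N, χ n * (n : ℂ) ^ (-(s : ℂ))) atTop
      (𝓝 (DirichletCharacter.LFunction χ s)) := by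
    rw [DirichletCharacter.LFunction_eq_LSeries χ hs']
    simpa only [hpartial, LSeries] using (tendsto_add_atTop_iff_nat 1).2
      (ZMod.LSeriesSummable_of_one_lt_re χ hs').hasSum.tendsto_sum_nat
  refine le_of_tendsto (hlim.sub_const _).norm ?_
  filter_upwards [eventually_ge_atTop ⌊B⌋₊] with N hN
  rw [← Finset.sum_Ioc_consecutive _ (Nat.zero_le _) hN, add_sub_cancel_left]
  have hnorm : ‖(s : ℂ)‖ ≤ 1 * (s : ℂ).re := by simp [abs_of_pos (zero_lt_one.trans hs)]
  simpa only [ofReal_re, one_mul] using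
    norm_sum_Ioc_mul_cpow_le le_rfl hnorm hB (norm_sum_Ioc_dirichletCharacter_le hχ _) N

lemma norm_sum_div_sub_LFunction_one_le (hχ : χ ≠ 1) {B : ℝ} (hB : 0 < B) :
    ‖∑ n ∈ Finset.Ioc 0 ⌊B⌋₊, χ n / n - DirichletCharacter.LFunction χ 1‖ ≤ D / B := by
  have hL : Tendsto (fun s : ℝ ↦ ‖DirichletCharacter.LFunction χ s -
      ∑ n ∈ Finset.Ioc 0 ⌊B⌋₊, χ n * (n : ℂ) ^ (-(s : ℂ))‖) (𝓝[>] 1)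
      (𝓝 ‖DirichletCharacter.LFunction χ (1 : ℝ) -
        ∑ n ∈ Finset.Ioc 0 ⌊B⌋₊, χ n * (n : ℂ) ^ (-((1 : ℝ) : ℂ))‖) := by
    refine Tendsto.mono_left (Continuous.tendsto ?_ 1) nhdsWithin_le_nhds
    refine (((DirichletCharacter.differentiable_LFunction hχ).continuous.comp
      continuous_ofReal).sub (continuous_finsetSum _ fun n hn ↦ ?_)).norm
    have hn0 : (n : ℂ) ≠ 0 := Nat.cast_ne_zero.2 (by grind)
    exact continuous_const.mul (Continuous.const_cpow (by fun_prop) (Or.inl hn0))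
  have hR : Tendsto (fun s : ℝ ↦ D * B ^ (-s)) (𝓝[>] 1) (𝓝 (D * B ^ (-1 : ℝ))) :=
    (continuous_const.mul (continuous_const.rpow continuous_neg fun _ ↦
      Or.inl hB.ne')).tendsto 1 |>.mono_left nhdsWithin_le_nhds
  have hlim := le_of_tendsto_of_tendsto hL hR <| by
    filter_upwards [self_mem_nhdsWithin] with s hs
    exact norm_sum_sub_LFunction_le_of_one_lt hχ hs hB
  rw [norm_sub_rev]
  simpa [cpow_neg_one, Real.rpow_neg_one, div_eq_mul_inv] using hlim

end Character

/-! ### Partial sums of `ζ(s) L(s, χ)` -/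

lemma norm_sum_mul_sum_cpow_sub_le {c : ℕ → ℂ} (hc : ∀ n, ‖c n‖ ≤ 1) {s : ℂ} {C : ℝ}
    (hC : ∀ u : ℝ, 1 ≤ u → ‖∑ n ∈ Finset.Ioc 0 ⌊u⌋₊, (n : ℂ) ^ (-s) -
      (u : ℂ) ^ (1 - s) / (1 - s)‖ ≤ C * u ^ (-s.re))
    {B y : ℝ} (hB : 0 < B) (hBy : B ≤ y) :
    ‖∑ b ∈ Finset.Ioc 0 ⌊B⌋₊, c b * (b : ℂ) ^ (-s) *
        ∑ a ∈ Finset.Ioc 0 ⌊y / b⌋₊, (a : ℂ) ^ (-s) -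
      (∑ b ∈ Finset.Ioc 0 ⌊B⌋₊, c b / b) * ((y : ℂ) ^ (1 - s) / (1 - s))‖ ≤
    C * (B * y ^ (-s.re)) := by
  have hy : 0 < y := hB.trans_le hBy
  have hC0 : 0 ≤ C := by simpa using (norm_nonneg _).trans (hC 1 le_rfl)
  have hterm {b : ℕ} (hb : b ∈ Finset.Ioc 0 ⌊B⌋₊) :
      ‖c b * (b : ℂ) ^ (-s) * ∑ a ∈ Finset.Ioc 0 ⌊y / b⌋₊, (a : ℂ) ^ (-s) -
        c b / b * ((y : ℂ) ^ (1 - s) / (1 - s))‖ ≤ C * y ^ (-s.re) := by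
    obtain ⟨hb0, hbB⟩ := Finset.mem_Ioc.1 hb
    have hbpos : (0 : ℝ) < b := Nat.cast_pos.2 hb0
    have hyb : 1 ≤ y / b := (one_le_div hbpos).2 (((Nat.le_floor_iff hB.le).1 hbB).trans hBy)
    have hscale : (y : ℂ) ^ (1 - s) / b = (b : ℂ) ^ (-s) * ((y / b : ℝ) : ℂ) ^ (1 - s) := by
      have hb' : (b : ℂ) ≠ 0 := Nat.cast_ne_zero.2 hb0.ne'
      have hsplit : (y : ℂ) = (b : ℝ) * (y / b : ℝ) := by push_cast; field_simp
      rw [hsplit, mul_cpow_ofReal_nonneg hbpos.le (zero_le_one.trans hyb), ofReal_natCast,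
        sub_eq_neg_add, cpow_add _ _ hb', cpow_one]
      field_simp
    calc ‖c b * (b : ℂ) ^ (-s) * ∑ a ∈ Finset.Ioc 0 ⌊y / b⌋₊, (a : ℂ) ^ (-s) -
          c b / b * ((y : ℂ) ^ (1 - s) / (1 - s))‖
        = ‖c b‖ * (b : ℝ) ^ (-s.re) * ‖∑ a ∈ Finset.Ioc 0 ⌊y / b⌋₊, (a : ℂ) ^ (-s) -
            ((y / b : ℝ) : ℂ) ^ (1 - s) / (1 - s)‖ := by
          rw [← norm_natCast_cpow_neg s hb0, ← norm_mul, ← norm_mul, mul_sub]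
          congr 2
          linear_combination c b / (1 - s) * hscale
      _ ≤ 1 * (b : ℝ) ^ (-s.re) * (C * (y / b) ^ (-s.re)) := by
          gcongr
          exacts [hc b, hC _ hyb]
      _ = C * y ^ (-s.re) := by
          rw [Real.div_rpow hy.le hbpos.le]
          field_simp
  rw [Finset.sum_mul, ← Finset.sum_sub_distrib]
  calc _ ≤ ∑ _b ∈ Finset.Ioc 0 ⌊B⌋₊, C * y ^ (-s.re) := norm_sum_le_of_le _ fun b hb ↦ hterm hb
    _ = C * (⌊B⌋₊ * y ^ (-s.re)) := by simp; ring
    _ ≤ C * (B * y ^ (-s.re)) := by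
        gcongr
        exact Nat.floor_le hB.le

lemma norm_sum_sum_Ioc_mul_cpow_le {c : ℕ → ℂ} {M K : ℝ} {s : ℂ} (hK : 1 ≤ K)
    (hs : ‖s‖ ≤ K * s.re) {B : ℝ} (hB : 0 < B)
    (hc : ∀ n, ‖∑ k ∈ Finset.Ioc ⌊B⌋₊ n, c k‖ ≤ M) (A : ℕ) (N : ℕ → ℕ) :
    ‖∑ a ∈ Finset.Ioc 0 A, (∑ b ∈ Finset.Ioc ⌊B⌋₊ (N a), c b * (b : ℂ) ^ (-s)) * (a : ℂ) ^ (-s)‖ ≤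
      M * (K * B ^ (-s.re)) * ∑ a ∈ Finset.Ioc 0 A, (a : ℝ) ^ (-s.re) := by
  rw [Finset.mul_sum]
  refine norm_sum_le_of_le _ fun a ha ↦ ?_
  rw [norm_mul, norm_natCast_cpow_neg s (Finset.mem_Ioc.1 ha).1]
  gcongr
  exact norm_sum_Ioc_mul_cpow_le hK hs hB hc (N a)

lemma sum_dirichletTwist_zetaMul_eq {D : ℕ} (χ : DirichletCharacter ℂ D) (s : ℂ) {N A B : ℕ}
    (h : N < (A + 1) * (B + 1)) :
    ∑ n ∈ Finset.Ioc 0 N, dirichletTwist s χ.zetaMul n =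
      ∑ b ∈ Finset.Ioc 0 B, χ b * (b : ℂ) ^ (-s) * ∑ a ∈ Finset.Ioc 0 (N / b), (a : ℂ) ^ (-s) +
        ∑ a ∈ Finset.Ioc 0 A, (∑ b ∈ Finset.Ioc B (N / a), χ b * (b : ℂ) ^ (-s)) *
          (a : ℂ) ^ (-s) := by
  have hχ {n : ℕ} (hn : 0 < n) :
      dirichletTwist s (toArithmeticFunction (χ ·)) n = χ n * (n : ℂ) ^ (-s) := by
    rw [dirichletTwist_apply, ← χ.apply_eq_toArithmeticFunction_apply hn.ne']
  have hζ {n : ℕ} (hn : 0 < n) : dirichletTwist s (zeta : ArithmeticFunction ℂ) n =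
      (n : ℂ) ^ (-s) := by
    rw [dirichletTwist_apply, natCoe_apply, zeta_apply_ne hn.ne', Nat.cast_one, one_mul]
  rw [DirichletCharacter.zetaMul, mul_comm, dirichletTwist_mul, sum_Ioc_mul_eq_hyperbola _ _ h]
  refine congrArg₂ (· + ·) (Finset.sum_congr rfl fun b hb ↦ ?_) (Finset.sum_congr rfl fun a ha ↦ ?_)
  · rw [hχ (Finset.mem_Ioc.1 hb).1]
    exact congrArg _ (Finset.sum_congr rfl fun a ha ↦ hζ (Finset.mem_Ioc.1 ha).1)
  · rw [hζ (Finset.mem_Ioc.1 ha).1]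
    exact congrArg (· * _) (Finset.sum_congr rfl fun b hb ↦ hχ (by grind))

lemma norm_cpow_one_sub {y : ℝ} (hy : 0 < y) (s : ℂ) :
    ‖(y : ℂ) ^ (1 - s)‖ = y * y ^ (-s.re) := by
  rw [norm_cpow_eq_rpow_re_of_pos hy, sub_re, one_re, sub_eq_add_neg, Real.rpow_add hy,
    Real.rpow_one]

lemma mul_sqrt_div_eq {D : ℝ} (hD : 0 ≤ D) (y : ℝ) : D * √(y / D) = √D * √y := by
  rw [Real.sqrt_div' _ hD, mul_div_left_comm, Real.div_sqrt, mul_comm]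

section Character

variable {D : ℕ} [NeZero D] {χ : DirichletCharacter ℂ D}

lemma norm_sum_div_sub_LFunction_one_mul_cpow_le (hχ : χ ≠ 1) (s : ℂ) {B y : ℝ} (hB : 0 < B)
    (hy : 0 < y) :
    ‖(∑ b ∈ Finset.Ioc 0 ⌊B⌋₊, χ b / b - DirichletCharacter.LFunction χ 1) *
      ((y : ℂ) ^ (1 - s) / (1 - s))‖ ≤ D / B * (y * y ^ (-s.re) / ‖1 - s‖) := by
  rw [norm_mul, norm_div, norm_cpow_one_sub hy]
  gcongr
  exact norm_sum_div_sub_LFunction_one_le hχ hB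

lemma norm_sum_zetaMul_mul_cpow_sub_le (hχ : χ ≠ 1) {s : ℂ} {C K W y : ℝ} (hK : 1 ≤ K)
    (hs : ‖s‖ ≤ K * s.re)
    (hC : ∀ u : ℝ, 1 ≤ u → ‖∑ n ∈ Finset.Ioc 0 ⌊u⌋₊, (n : ℂ) ^ (-s) -
      (u : ℂ) ^ (1 - s) / (1 - s)‖ ≤ C * u ^ (-s.re))
    (hW : ∑ n ∈ Finset.Ioc 0 ⌊√(y / D)⌋₊, (n : ℝ) ^ (-s.re) ≤ W * √(y / D) ^ (1 - s.re))
    (hy : D ≤ y) :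
    ‖∑ n ∈ Finset.Ioc 0 ⌊y⌋₊, dirichletTwist s χ.zetaMul n -
      DirichletCharacter.LFunction χ 1 * ((y : ℂ) ^ (1 - s) / (1 - s))‖ ≤
    √D * y ^ (1 / 2 - s.re) * (C + 1 / ‖1 - s‖ + K * W) := by
  have hD : (0 : ℝ) < D := Nat.cast_pos.2 (NeZero.pos D)
  have hy0 : 0 < y := hD.trans_le hy
  set A := √(y / D)
  set B := √D * √y
  have hA : 0 < A := Real.sqrt_pos.2 (by positivity)
  have hB : 0 < B := by positivity
  have hDA : D * A = B := mul_sqrt_div_eq hD.le y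
  have hAB : A * B = y := by
    rw [← hDA, mul_left_comm, Real.mul_self_sqrt (by positivity)]
    field_simp
  have hBy : B ≤ y := by
    calc √D * √y ≤ √y * √y := by gcongr
      _ = y := Real.mul_self_sqrt hy0.le
  have herr : √D * y ^ (1 / 2 - s.re) = B * y ^ (-s.re) := by
    rw [sub_eq_add_neg, Real.rpow_add hy0, ← Real.sqrt_eq_rpow, mul_assoc]
  have hmain := norm_sum_mul_sum_cpow_sub_le (fun n ↦ χ.norm_le_one n) hC hB hBy
  have hL := norm_sum_div_sub_LFunction_one_mul_cpow_le hχ s hB hy0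
  have hLscale : D / B * (y * y ^ (-s.re) / ‖1 - s‖) = 1 / ‖1 - s‖ * (B * y ^ (-s.re)) := by
    have hDB : D / B * y = B := by rw [← hAB, ← hDA]; field_simp
    linear_combination y ^ (-s.re) / ‖1 - s‖ * hDB
  have htail := (norm_sum_sum_Ioc_mul_cpow_le hK hs hB
    (norm_sum_Ioc_dirichletCharacter_le hχ ⌊B⌋₊) ⌊A⌋₊ (fun a ↦ ⌊y⌋₊ / a)).trans
    (mul_le_mul_of_nonneg_left hW (by positivity))
  have htailscale : D * (K * B ^ (-s.re)) * (W * A ^ (1 - s.re)) = K * W * (B * y ^ (-s.re)) := by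
    rw [← hAB, Real.mul_rpow hA.le hB.le, sub_eq_add_neg, Real.rpow_add hA, Real.rpow_one]
    linear_combination K * W * A ^ (-s.re) * B ^ (-s.re) * hDA
  rw [hLscale] at hL
  rw [htailscale] at htail
  rw [sum_dirichletTwist_zetaMul_eq χ s (hAB ▸ floor_mul_lt hA.le hB.le), herr]
  simp_rw [Nat.floor_div_natCast] at hmain
  refine le_trans (le_of_eq ?_) ((norm_add₃_le.trans (add_le_add_three hmain hL htail)).trans_eq ?_)
  · congr 1
    ring
  · ring

end Character

/-! ### The Dirichlet inverse of `1 * χ` -/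

lemma norm_le_norm_of_isMultiplicative {f g : ArithmeticFunction ℂ} (hf : f.IsMultiplicative)
    (hg : g.IsMultiplicative) (h : ∀ p k : ℕ, p.Prime → ‖f (p ^ k)‖ ≤ ‖g (p ^ k)‖) (n : ℕ) :
    ‖f n‖ ≤ ‖g n‖ := by
  rcases eq_or_ne n 0 with rfl | hn
  · simp
  rw [hf.multiplicative_factorization _ hn, hg.multiplicative_factorization _ hn, Finsupp.prod,
    Finsupp.prod, norm_prod, norm_prod]
  exact Finset.prod_le_prod (fun _ _ ↦ norm_nonneg _) fun p hp ↦
    h p _ (Nat.prime_of_mem_primeFactors hp)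

/-- The Dirichlet inverse `μ * χμ` of `χ.zetaMul`, i.e. the coefficients of
`1 / (ζ(s) L(s, χ))`. -/
noncomputable def zetaMulInv {D : ℕ} (χ : DirichletCharacter ℂ D) : ArithmeticFunction ℂ :=
  moebius * (toArithmeticFunction (χ ·)).pmul moebius

section ZetaMulInv

variable {D : ℕ} (χ : DirichletCharacter ℂ D)

lemma isMultiplicative_zetaMulInv : (zetaMulInv χ).IsMultiplicative :=
  isMultiplicative_moebius.intCast.mul
    (χ.isMultiplicative_toArithmeticFunction.pmul isMultiplicative_moebius.intCast)

lemma zetaMulInv_mul_zetaMul : zetaMulInv χ * χ.zetaMul = 1 := by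
  have htwist : (toArithmeticFunction (χ ·)).pmul moebius =
      toArithmeticFunction (fun n ↦ χ n * (moebius n : ℂ)) := by
    ext n
    rcases eq_or_ne n 0 with rfl | hn
    · simp
    · rw [pmul_apply, intCoe_apply]
      simp [toArithmeticFunction, hn]
  have hχ : toArithmeticFunction (χ ·) * (toArithmeticFunction (χ ·)).pmul moebius = 1 := by
    rw [htwist]
    exact DFunLike.coe_injective (χ.convolution_mul_moebius.trans one_eq_delta.symm)
  calc zetaMulInv χ * χ.zetaMul
      = (zeta * moebius) * (toArithmeticFunction (χ ·) *
          (toArithmeticFunction (χ ·)).pmul moebius) := by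
        rw [zetaMulInv, DirichletCharacter.zetaMul]
        ring
    _ = 1 := by rw [coe_zeta_mul_coe_moebius, hχ, one_mul]

lemma zetaMul_apply_prime_pow {p : ℕ} (hp : p.Prime) (k : ℕ) :
    χ.zetaMul (p ^ k) = ∑ i ∈ Finset.range (k + 1), χ p ^ i := by
  rw [DirichletCharacter.zetaMul, coe_zeta_mul_apply, Nat.sum_divisors_prime_pow hp]
  refine Finset.sum_congr rfl fun i _ ↦ ?_
  rw [← χ.apply_eq_toArithmeticFunction_apply (pow_ne_zero i hp.ne_zero), Nat.cast_pow, map_pow]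

lemma zetaMulInv_apply_prime_pow {p : ℕ} (hp : p.Prime) (k : ℕ) :
    zetaMulInv χ (p ^ k) = ∑ i ∈ Finset.range (k + 1),
      (moebius (p ^ i) : ℂ) * (χ p ^ (k - i) * moebius (p ^ (k - i))) := by
  rw [zetaMulInv, mul_apply, Nat.sum_divisorsAntidiagonal
    (fun a b ↦ (moebius : ArithmeticFunction ℂ) a * (toArithmeticFunction (χ ·)).pmul moebius b),
    Nat.sum_divisors_prime_pow hp]
  refine Finset.sum_congr rfl fun i hi ↦ ?_
  rw [Nat.pow_div (Finset.mem_range_succ_iff.1 hi) hp.pos, pmul_apply, intCoe_apply, intCoe_apply,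
    ← χ.apply_eq_toArithmeticFunction_apply (pow_ne_zero _ hp.ne_zero), Nat.cast_pow,
    map_pow χ]

variable {χ}

lemma norm_zetaMulInv_prime_pow_le (hχ : χ ^ 2 = 1) {p : ℕ} (hp : p.Prime) (k : ℕ) :
    ‖zetaMulInv χ (p ^ k)‖ ≤ ‖χ.zetaMul (p ^ k)‖ := by
  have hμ {i : ℕ} (hi : 2 ≤ i) : moebius (p ^ i) = 0 := by
    rw [moebius_apply_prime_pow hp (by omega), if_neg (by omega)]
  rw [zetaMulInv_apply_prime_pow χ hp, zetaMul_apply_prime_pow χ hp]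
  match k with
  | 0 => simp
  | 1 =>
    rcases MulChar.isQuadratic_iff_sq_eq_one.2 hχ p with h | h | h <;>
      norm_num [Finset.sum_range_succ, moebius_apply_prime hp, h]
  | 2 =>
    rcases MulChar.isQuadratic_iff_sq_eq_one.2 hχ p with h | h | h <;>
      norm_num [Finset.sum_range_succ, moebius_apply_prime hp, hμ, h]
  | k + 3 =>
    rw [Finset.sum_eq_zero fun i _ ↦ ?_, norm_zero]
    · exact norm_nonneg _
    · rcases le_or_gt 2 i with hi | hi
      · rw [hμ hi, Int.cast_zero, zero_mul]
      · rw [hμ (i := k + 3 - i) (by omega), Int.cast_zero, mul_zero, mul_zero]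

lemma norm_zetaMulInv_le (hχ : χ ^ 2 = 1) (n : ℕ) : ‖zetaMulInv χ n‖ ≤ ‖χ.zetaMul n‖ :=
  norm_le_norm_of_isMultiplicative (isMultiplicative_zetaMulInv χ) χ.isMultiplicative_zetaMul
    (fun _ k hp ↦ norm_zetaMulInv_prime_pow_le hχ hp k) n

end ZetaMulInv

/-! ### Weighted sums -/

lemma sum_Ioc_mul_le_of_antitone {d w : ℕ → ℝ} {c : ℝ} {m : ℕ}
    (hd : ∀ n, ∑ k ∈ Finset.Ioc m n, d k ≤ c) (hw0 : ∀ n, m < n → 0 ≤ w n)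
    (hw : ∀ n, m < n → w (n + 1) ≤ w n) (n : ℕ) :
    ∑ k ∈ Finset.Ioc m n, d k * w k ≤ c * w (m + 1) := by
  rcases lt_or_ge n m with hn | hn
  · rw [Finset.Ioc_eq_empty_of_le hn.le, Finset.sum_empty]
    exact mul_nonneg (by simpa using hd m) (hw0 _ m.lt_succ_self)
  have hsum : ∑ k ∈ Finset.Ioc m n, d k * w k ≤
      c * w (m + 1) - (c - ∑ k ∈ Finset.Ioc m n, d k) * w (n + 1) := by
    induction n, hn using Nat.le_induction with
    | base => simp
    | succ n hmn ih =>
      have hstep := mul_le_mul_of_nonneg_left (hw (n + 1) (by lia)) (sub_nonneg.2 (hd (n + 1)))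
      rw [Finset.sum_Ioc_succ_top hmn] at hstep ⊢
      rw [Finset.sum_Ioc_succ_top hmn]
      linarith
  linarith [mul_nonneg (sub_nonneg.2 (hd n)) (hw0 (n + 1) (by lia))]

lemma sqrt_sub_sqrt_le_sum_inv_sqrt {m n : ℕ} (h : m ≤ n) :
    √n - √m ≤ ∑ k ∈ Finset.Ioc m n, (√k)⁻¹ := by
  induction n, h using Nat.le_induction with
  | base => simp
  | succ n hmn ih =>
    have hpos : 0 < √((n + 1 : ℕ) : ℝ) := Real.sqrt_pos.2 (by positivity)
    have hsq : √((n + 1 : ℕ) : ℝ) * √((n + 1 : ℕ) : ℝ) = n + 1 := by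
      rw [Real.mul_self_sqrt (by positivity), Nat.cast_succ]
    have hstep : √((n + 1 : ℕ) : ℝ) - √n ≤ (√((n + 1 : ℕ) : ℝ))⁻¹ := by
      rw [inv_eq_one_div, le_div_iff₀ hpos, sub_mul, hsq]
      have hle : √(n : ℝ) ≤ √((n + 1 : ℕ) : ℝ) := Real.sqrt_le_sqrt (by simp)
      nlinarith [Real.mul_self_sqrt (Nat.cast_nonneg (α := ℝ) n), Real.sqrt_nonneg (n : ℝ)]
    rw [Finset.sum_Ioc_succ_top hmn]
    linarith

lemma sum_Ioc_inv_le_one_add_log {x : ℝ} (hx : 1 ≤ x) (m : ℕ) :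
    ∑ n ∈ Finset.Ioc m ⌊x⌋₊, (n : ℝ)⁻¹ ≤ 1 + Real.log x := by
  have hharmonic := harmonic_floor_le_one_add_log x hx
  rw [harmonic_eq_sum_Icc] at hharmonic
  push_cast at hharmonic
  exact (Finset.sum_le_sum_of_subset_of_nonneg (Finset.Ioc_subset_Ioc_left m.zero_le)
    fun n _ _ ↦ by positivity).trans hharmonic

lemma rpow_neg_le_mul_inv {σ x : ℝ} (hσ : σ ≤ 1) {n : ℕ} (hn : 0 < n) (hx : n ≤ x) :
    (n : ℝ) ^ (-σ) ≤ x ^ (1 - σ) * (n : ℝ)⁻¹ := by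
  have hn0 : (0 : ℝ) < n := Nat.cast_pos.2 hn
  calc (n : ℝ) ^ (-σ) = (n : ℝ) ^ (1 - σ) * (n : ℝ)⁻¹ := by
        rw [← Real.rpow_neg_one, ← Real.rpow_add hn0]
        congr 1
        ring
    _ ≤ x ^ (1 - σ) * (n : ℝ)⁻¹ := by gcongr

lemma sum_Ioc_mul_rpow_neg_le {f : ℕ → ℝ} (hf : ∀ n, 0 ≤ f n) {σ x : ℝ} (hσ : σ ≤ 1) (m : ℕ) :
    ∑ n ∈ Finset.Ioc m ⌊x⌋₊, f n * (n : ℝ) ^ (-σ) ≤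
      x ^ (1 - σ) * ∑ n ∈ Finset.Ioc m ⌊x⌋₊, f n * (n : ℝ)⁻¹ := by
  rw [Finset.mul_sum]
  refine Finset.sum_le_sum fun n hn ↦ ?_
  have hn0 : 0 < n := by grind
  have hnx : (n : ℝ) ≤ x := (Nat.le_floor_iff' hn0.ne').1 (Finset.mem_Ioc.1 hn).2
  calc f n * (n : ℝ) ^ (-σ) ≤ f n * (x ^ (1 - σ) * (n : ℝ)⁻¹) :=
        mul_le_mul_of_nonneg_left (rpow_neg_le_mul_inv hσ hn0 hnx) (hf n)
    _ = x ^ (1 - σ) * (f n * (n : ℝ)⁻¹) := by ring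

lemma sum_Ioc_rpow_neg_le {σ x : ℝ} (hσ : σ ≤ 1) (hx : 1 ≤ x) (m : ℕ) :
    ∑ n ∈ Finset.Ioc m ⌊x⌋₊, (n : ℝ) ^ (-σ) ≤ x ^ (1 - σ) * (1 + Real.log x) := by
  have h := sum_Ioc_mul_rpow_neg_le (f := fun _ ↦ 1) (fun _ ↦ zero_le_one) (x := x) hσ m
  simp only [one_mul] at h
  refine h.trans ?_
  gcongr
  exact sum_Ioc_inv_le_one_add_log hx m

lemma sum_Ioc_inv_sqrt_mul_rpow_neg_le {σ x y : ℝ} (hσ : 1 / 2 ≤ σ) (hx : 1 ≤ x) (hy : 0 < y) :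
    ∑ n ∈ Finset.Ioc ⌊y⌋₊ ⌊x⌋₊, (√n)⁻¹ * (n : ℝ) ^ (-σ) ≤
      y ^ (1 / 2 - σ) * (1 + Real.log x) := by
  refine le_trans ?_ (mul_le_mul_of_nonneg_left (sum_Ioc_inv_le_one_add_log hx ⌊y⌋₊)
    (by positivity))
  rw [Finset.mul_sum]
  refine Finset.sum_le_sum fun n hn ↦ ?_
  have hyn : y ≤ n := ((Nat.floor_lt hy.le).1 (Finset.mem_Ioc.1 hn).1).le
  have hn0 : (0 : ℝ) < n := hy.trans_le hyn
  calc (√n)⁻¹ * (n : ℝ) ^ (-σ) = (n : ℝ) ^ (1 / 2 - σ) * (n : ℝ)⁻¹ := by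
        rw [Real.sqrt_eq_rpow, ← Real.rpow_neg hn0.le, ← Real.rpow_neg_one,
          ← Real.rpow_add hn0, ← Real.rpow_add hn0]
        congr 1
        ring
    _ ≤ y ^ (1 / 2 - σ) * (n : ℝ)⁻¹ :=
        mul_le_mul_of_nonneg_right (Real.rpow_le_rpow_of_nonpos hy hyn (by linarith))
          (by positivity)

lemma add_mul_sqrt_mul_rpow_neg {y : ℝ} (hy : 0 < y) (L E σ : ℝ) :
    (L * y + E * √y) * y ^ (-σ) = L * y ^ (1 - σ) + E * y ^ (1 / 2 - σ) := by
  rw [sub_eq_add_neg 1, sub_eq_add_neg (1 / 2), Real.rpow_add hy, Real.rpow_add hy,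
    Real.rpow_one, ← Real.sqrt_eq_rpow]
  ring

-- Compare `f` with `L + E / √n`, whose sums over `(y, n]` exceed `L n + E √n - (L y + E √y)`.
lemma sum_Ioc_mul_rpow_neg_le_of_sum_le {f : ℕ → ℝ} {L E y X σ : ℝ} (hL : 0 ≤ L) (hE : 0 ≤ E)
    (hσ : 1 / 2 ≤ σ) (hσ1 : σ ≤ 1) (hy : 0 < y) (hyX : y ≤ X) (hX : 1 ≤ X)
    (hf : ∀ n, ⌊y⌋₊ < n → ∑ k ∈ Finset.Ioc ⌊y⌋₊ n, f k ≤ L * n + E * √n) :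
    ∑ n ∈ Finset.Ioc ⌊y⌋₊ ⌊X⌋₊, f n * (n : ℝ) ^ (-σ) ≤
      (2 + Real.log X) * (L * X ^ (1 - σ) + E * y ^ (1 / 2 - σ)) := by
  set m := ⌊y⌋₊
  have hm : (m : ℝ) ≤ y := Nat.floor_le hy.le
  have hlt {n : ℕ} (hn : m < n) : y ≤ n := ((Nat.floor_lt hy.le).1 hn).le
  have hcompare (n : ℕ) :
      ∑ k ∈ Finset.Ioc m n, (f k - (L + E * (√k)⁻¹)) ≤ L * y + E * √y := by
    rcases le_or_gt n m with hn | hn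
    · rw [Finset.Ioc_eq_empty_of_le hn, Finset.sum_empty]
      positivity
    rw [Finset.sum_sub_distrib, Finset.sum_add_distrib, ← Finset.mul_sum, Finset.sum_const,
      Nat.card_Ioc, nsmul_eq_mul, Nat.cast_sub hn.le]
    have h1 := mul_le_mul_of_nonneg_left (sqrt_sub_sqrt_le_sum_inv_sqrt hn.le) hE
    have h2 := mul_le_mul_of_nonneg_left (Real.sqrt_le_sqrt hm) hE
    have h3 := mul_le_mul_of_nonneg_left hm hL
    linarith [hf n hn]
  have hanti {a b : ℝ} (ha : 0 < a) (hab : a ≤ b) : b ^ (-σ) ≤ a ^ (-σ) :=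
    Real.rpow_le_rpow_of_nonpos ha hab (by linarith)
  have habel := sum_Ioc_mul_le_of_antitone hcompare (w := fun n ↦ (n : ℝ) ^ (-σ))
    (fun n _ ↦ by positivity) (fun n hn ↦ hanti (Nat.cast_pos.2 (by lia)) (by simp)) ⌊X⌋₊
  have hboundary : (L * y + E * √y) * ((m + 1 : ℕ) : ℝ) ^ (-σ) ≤
      L * X ^ (1 - σ) + E * y ^ (1 / 2 - σ) := by
    calc (L * y + E * √y) * ((m + 1 : ℕ) : ℝ) ^ (-σ) ≤ (L * y + E * √y) * y ^ (-σ) :=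
          mul_le_mul_of_nonneg_left (hanti hy (hlt m.lt_succ_self)) (by positivity)
      _ = L * y ^ (1 - σ) + E * y ^ (1 / 2 - σ) := add_mul_sqrt_mul_rpow_neg hy L E σ
      _ ≤ L * X ^ (1 - σ) + E * y ^ (1 / 2 - σ) := by gcongr
  have hmodel := add_le_add
    (mul_le_mul_of_nonneg_left (sum_Ioc_rpow_neg_le hσ1 hX m) hL)
    (mul_le_mul_of_nonneg_left (sum_Ioc_inv_sqrt_mul_rpow_neg_le hσ hX hy) hE)
  simp_rw [sub_mul, add_mul, mul_assoc, Finset.sum_sub_distrib, Finset.sum_add_distrib,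
    ← Finset.mul_sum] at habel
  linarith

/-! ### Sums of the coefficients of `ζ(s) L(s, χ)` -/

section ZetaMul

variable {D : ℕ} (χ : DirichletCharacter ℂ D)

lemma sum_norm_zetaMul_mul_inv_le {x : ℝ} (hx : 1 ≤ x) :
    ∑ n ∈ Finset.Ioc 0 ⌊x⌋₊, ‖χ.zetaMul n‖ * (n : ℝ)⁻¹ ≤ (1 + Real.log x) ^ 2 := by
  have hle {f : ArithmeticFunction ℂ} (hf : ∀ n, ‖f n‖ ≤ 1) :
      ∑ n ∈ Finset.Ioc 0 ⌊x⌋₊, ‖dirichletTwist 1 f n‖ ≤ 1 + Real.log x := by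
    refine (Finset.sum_le_sum fun n _ ↦ ?_).trans (sum_Ioc_inv_le_one_add_log hx 0)
    rw [norm_dirichletTwist, one_re, Real.rpow_neg_one]
    exact mul_le_of_le_one_left (by positivity) (hf n)
  have hζ : ∀ n, ‖(zeta : ArithmeticFunction ℂ) n‖ ≤ 1 := fun n ↦ by
    rw [natCoe_apply, zeta_apply]
    split_ifs <;> simp
  have hχ : ∀ n, ‖toArithmeticFunction (χ ·) n‖ ≤ 1 := fun n ↦ by
    rcases eq_or_ne n 0 with rfl | hn
    · simp
    · exact (χ.apply_eq_toArithmeticFunction_apply hn) ▸ χ.norm_le_one n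
  calc ∑ n ∈ Finset.Ioc 0 ⌊x⌋₊, ‖χ.zetaMul n‖ * (n : ℝ)⁻¹
      = ∑ n ∈ Finset.Ioc 0 ⌊x⌋₊, ‖dirichletTwist 1 χ.zetaMul n‖ := by
        simp_rw [norm_dirichletTwist, one_re, Real.rpow_neg_one]
    _ ≤ (1 + Real.log x) * (1 + Real.log x) := by
        rw [DirichletCharacter.zetaMul, dirichletTwist_mul]
        exact (sum_norm_mul_le _ _ _).trans (mul_le_mul (hle hζ) (hle hχ)
          (by positivity) (by linarith [Real.log_nonneg hx]))
    _ = (1 + Real.log x) ^ 2 := by ring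

lemma sum_norm_zetaMul_mul_rpow_neg_le {σ x : ℝ} (hσ : σ ≤ 1) (hx : 1 ≤ x) :
    ∑ n ∈ Finset.Ioc 0 ⌊x⌋₊, ‖χ.zetaMul n‖ * (n : ℝ) ^ (-σ) ≤
      x ^ (1 - σ) * (1 + Real.log x) ^ 2 :=
  (sum_Ioc_mul_rpow_neg_le (fun _ ↦ norm_nonneg _) hσ 0).trans
    (mul_le_mul_of_nonneg_left (sum_norm_zetaMul_mul_inv_le χ hx) (by positivity))

variable [NeZero D] {χ}

lemma norm_sum_zetaMul_sub_le (hχ : χ ≠ 1) {y : ℝ} (hy : D ≤ y) :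
    ‖∑ n ∈ Finset.Ioc 0 ⌊y⌋₊, χ.zetaMul n - DirichletCharacter.LFunction χ 1 * y‖ ≤
      3 * √D * √y := by
  have hfloor (u : ℝ) (hu : 1 ≤ u) : ‖∑ n ∈ Finset.Ioc 0 ⌊u⌋₊, (n : ℂ) ^ (-0 : ℂ) -
      (u : ℂ) ^ (1 - 0 : ℂ) / (1 - 0)‖ ≤ 1 * u ^ (-(0 : ℂ).re) := by
    have hu0 : 0 ≤ u := zero_le_one.trans hu
    simp only [neg_zero, cpow_zero, Finset.sum_const, Nat.card_Ioc, tsub_zero, nsmul_eq_mul,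
      mul_one, sub_zero, cpow_one, div_one, zero_re, Real.rpow_zero]
    rw [← ofReal_natCast, ← ofReal_sub, norm_real, Real.norm_eq_abs, abs_sub_comm,
      abs_of_nonneg (sub_nonneg.2 (Nat.floor_le hu0))]
    linarith [Nat.lt_floor_add_one u]
  have hcount (A : ℝ) (hA : 0 ≤ A) : ∑ n ∈ Finset.Ioc 0 ⌊A⌋₊, (n : ℝ) ^ (-(0 : ℂ).re) ≤
      1 * A ^ (1 - (0 : ℂ).re) := by
    simpa using Nat.floor_le hA
  have h := norm_sum_zetaMul_mul_cpow_sub_le hχ le_rfl (by simp) hfloor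
    (hcount _ (Real.sqrt_nonneg _)) hy
  have hsum : ∑ n ∈ Finset.Ioc 0 ⌊y⌋₊, dirichletTwist 0 χ.zetaMul n =
      ∑ n ∈ Finset.Ioc 0 ⌊y⌋₊, χ.zetaMul n := by
    simp_rw [dirichletTwist_apply, neg_zero, cpow_zero, mul_one]
  rw [hsum, sub_zero, cpow_one, div_one, zero_re, sub_zero, ← Real.sqrt_eq_rpow, norm_one] at h
  linarith

open ComplexOrder in
lemma LFunction_one_nonneg (hχ : χ ≠ 1) (hχ2 : χ ^ 2 = 1) :
    0 ≤ DirichletCharacter.LFunction χ 1 := by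
  have herr {n : ℕ} (hn : D ≤ n) : ‖(∑ k ∈ Finset.Ioc 0 n, χ.zetaMul k) / n -
      DirichletCharacter.LFunction χ 1‖ ≤ 3 * √D * (√n)⁻¹ := by
    have hn0 : (0 : ℝ) < n := Nat.cast_pos.2 ((NeZero.pos D).trans_le hn)
    have h := norm_sum_zetaMul_sub_le hχ (Nat.cast_le.2 hn)
    rw [Nat.floor_natCast, ofReal_natCast] at h
    have hn' : (n : ℂ) ≠ 0 := by exact_mod_cast hn0.ne'
    rw [div_sub' hn', norm_div, RCLike.norm_natCast, div_le_iff₀ hn0, mul_comm (n : ℂ)]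
    refine h.trans_eq ?_
    rw [mul_assoc (3 * √D), inv_mul_eq_div, Real.div_sqrt]
  have hlim : Tendsto (fun n : ℕ ↦ (∑ k ∈ Finset.Ioc 0 n, χ.zetaMul k) / n) atTop
      (𝓝 (DirichletCharacter.LFunction χ 1)) := by
    rw [tendsto_iff_norm_sub_tendsto_zero]
    have hzero : Tendsto (fun n : ℕ ↦ 3 * √D * (√n)⁻¹) atTop (𝓝 0) := by
      rw [← mul_zero (3 * √(D : ℝ))]
      exact (tendsto_inv_atTop_zero.comp
        (Real.tendsto_sqrt_atTop.comp tendsto_natCast_atTop_atTop)).const_mul _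
    exact squeeze_zero' (.of_forall fun _ ↦ norm_nonneg _)
      ((eventually_ge_atTop D).mono fun n hn ↦ herr hn) hzero
  exact ge_of_tendsto' hlim fun n ↦ div_nonneg
    (Finset.sum_nonneg fun k _ ↦ DirichletCharacter.zetaMul_nonneg hχ2 k) n.cast_nonneg

lemma sum_norm_zetaMul_le (hχ : χ ≠ 1) (hχ2 : χ ^ 2 = 1) {y : ℝ} (hy : D ≤ y) :
    ∑ n ∈ Finset.Ioc 0 ⌊y⌋₊, ‖χ.zetaMul n‖ ≤
      ‖DirichletCharacter.LFunction χ 1‖ * y + 3 * √D * √y := by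
  have hnorm : ∑ n ∈ Finset.Ioc 0 ⌊y⌋₊, ‖χ.zetaMul n‖ =
      ‖∑ n ∈ Finset.Ioc 0 ⌊y⌋₊, χ.zetaMul n‖ := by
    rw [Finset.sum_congr rfl fun n _ ↦
      eq_coe_norm_of_nonneg (DirichletCharacter.zetaMul_nonneg hχ2 n), ← ofReal_sum, norm_real,
      Real.norm_of_nonneg (Finset.sum_nonneg fun _ _ ↦ norm_nonneg _)]
  have hy0 : 0 ≤ y := (Nat.cast_nonneg D).trans hy
  have hmain : ‖DirichletCharacter.LFunction χ 1 * y‖ = ‖DirichletCharacter.LFunction χ 1‖ * y := by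
    rw [norm_mul, norm_real, Real.norm_of_nonneg hy0]
  rw [hnorm, ← hmain]
  linarith [norm_le_norm_sub_add (∑ n ∈ Finset.Ioc 0 ⌊y⌋₊, χ.zetaMul n)
    (DirichletCharacter.LFunction χ 1 * y), norm_sum_zetaMul_sub_le hχ hy]

lemma sum_Ioc_norm_zetaMul_mul_rpow_neg_le (hχ : χ ≠ 1) (hχ2 : χ ^ 2 = 1) {σ y X : ℝ}
    (hσ : 1 / 2 ≤ σ) (hσ1 : σ ≤ 1) (hy : D ≤ y) (hyX : y ≤ X) :
    ∑ n ∈ Finset.Ioc ⌊y⌋₊ ⌊X⌋₊, ‖χ.zetaMul n‖ * (n : ℝ) ^ (-σ) ≤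
      (2 + Real.log X) *
        (‖DirichletCharacter.LFunction χ 1‖ * X ^ (1 - σ) + 3 * √D * y ^ (1 / 2 - σ)) := by
  have hy1 : 1 ≤ y := (Nat.one_le_cast.2 (NeZero.pos D)).trans hy
  refine sum_Ioc_mul_rpow_neg_le_of_sum_le (norm_nonneg _) (by positivity) hσ hσ1 (by linarith)
    hyX (hy1.trans hyX) fun n hn ↦ ?_
  have hDn : (D : ℝ) ≤ n := hy.trans ((Nat.floor_lt (by linarith)).1 hn).le
  have h := sum_norm_zetaMul_le hχ hχ2 hDn
  rw [Nat.floor_natCast] at h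
  exact (Finset.sum_le_sum_of_subset_of_nonneg (Finset.Ioc_subset_Ioc_left (Nat.zero_le _))
    fun _ _ _ ↦ norm_nonneg _).trans h

lemma norm_sum_zetaMul_le_of_riemannZeta_eq_zero (hχ : χ ≠ 1) {s : ℂ} (hs : 0 < s.re)
    (hz : riemannZeta s = 0) {y : ℝ} (hy : D ≤ y) :
    ‖∑ n ∈ Finset.Ioc 0 ⌊y⌋₊, dirichletTwist s χ.zetaMul n‖ ≤
      (‖DirichletCharacter.LFunction χ 1‖ * y ^ (1 - s.re) +
        √D * y ^ (1 / 2 - s.re) * (1 + ‖s‖ * (2 + Real.log y))) / s.re := by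
  have hs1 := re_lt_one_of_riemannZeta_eq_zero hz
  have hD1 : (1 : ℝ) ≤ D := Nat.one_le_cast.2 (NeZero.pos D)
  have hy0 : 0 < y := by linarith
  set A := √(y / D)
  have hA1 : 1 ≤ A := Real.one_le_sqrt.2 ((one_le_div (by linarith)).2 hy)
  have hAy : A ≤ y := Real.sqrt_le_iff.2 ⟨hy0.le,
    (div_le_self hy0.le hD1).trans (le_self_pow₀ (hD1.trans hy) two_ne_zero)⟩
  have hW : ∑ n ∈ Finset.Ioc 0 ⌊A⌋₊, (n : ℝ) ^ (-s.re) ≤ (1 + Real.log y) * A ^ (1 - s.re) := by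
    refine (sum_Ioc_rpow_neg_le hs1.le hA1 0).trans ?_
    rw [mul_comm]
    gcongr
  have hζ : ∀ u : ℝ, 1 ≤ u → ‖∑ n ∈ Finset.Ioc 0 ⌊u⌋₊, (n : ℂ) ^ (-s) -
      (u : ℂ) ^ (1 - s) / (1 - s)‖ ≤ ‖s‖ / s.re * u ^ (-s.re) := fun u hu ↦ by
    simpa only [hz, sub_zero] using norm_sum_cpow_sub_le hs (by rintro rfl; simp at hs1) hu
  have hK : 1 ≤ ‖s‖ / s.re := (one_le_div hs).2 (re_le_norm s)
  have happrox := norm_sum_zetaMul_mul_cpow_sub_le hχ hK (div_mul_cancel₀ _ hs.ne').ge hζ hW hy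
  have hinv : 1 / ‖1 - s‖ ≤ 1 / s.re :=
    one_div_le_one_div_of_le hs (re_le_norm_one_sub_of_riemannZeta_eq_zero hs hz)
  have hmain : ‖DirichletCharacter.LFunction χ 1 * ((y : ℂ) ^ (1 - s) / (1 - s))‖ ≤
      ‖DirichletCharacter.LFunction χ 1‖ * (y ^ (1 - s.re) * (1 / s.re)) := by
    rw [norm_mul, norm_div, norm_cpow_eq_rpow_re_of_pos hy0, sub_re, one_re, div_eq_mul_one_div]
    gcongr
  have herr : √D * y ^ (1 / 2 - s.re) * (‖s‖ / s.re + 1 / ‖1 - s‖ +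
      ‖s‖ / s.re * (1 + Real.log y)) ≤
      √D * y ^ (1 / 2 - s.re) * (‖s‖ / s.re + 1 / s.re + ‖s‖ / s.re * (1 + Real.log y)) := by
    gcongr
  calc _ ≤ _ := norm_le_norm_sub_add _ _
    _ ≤ _ := add_le_add (happrox.trans herr) hmain
    _ = _ := by field_simp; ring

end ZetaMul

/-! ### The convolution identity at a zero of `ζ` -/

lemma rpow_neg_mul_div_rpow {n x : ℝ} (hn : 0 < n) (hx : 0 ≤ x) (σ τ : ℝ) :
    n ^ (-σ) * (x / n) ^ (τ - σ) = x ^ (τ - σ) * n ^ (-τ) := by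
  rw [Real.div_rpow hx hn.le, mul_div_left_comm, ← Real.rpow_sub hn]
  congr 2
  ring

lemma le_div_of_mem_Ioc_floor_div {x y : ℝ} (hy : 0 < y) {n : ℕ}
    (hn : n ∈ Finset.Ioc 0 ⌊x / y⌋₊) : y ≤ x / n := by
  obtain ⟨hn0, hn⟩ := Finset.mem_Ioc.1 hn
  exact (le_div_comm₀ (Nat.cast_pos.2 hn0) hy).1 ((Nat.le_floor_iff' hn0.ne').1 hn)

lemma one_le_norm_sum_zetaMulInv_add_norm_sum_zetaMul {D : ℕ} (χ : DirichletCharacter ℂ D) (s : ℂ)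
    {x Y : ℝ} (hx : 1 ≤ x) (hY : 0 < Y) :
    1 ≤ ‖∑ b ∈ Finset.Ioc 0 ⌊x / Y⌋₊, dirichletTwist s (zetaMulInv χ) b *
        ∑ a ∈ Finset.Ioc 0 (⌊x⌋₊ / b), dirichletTwist s χ.zetaMul a‖ +
      ‖∑ a ∈ Finset.Ioc 0 ⌊Y⌋₊, (∑ b ∈ Finset.Ioc ⌊x / Y⌋₊ (⌊x⌋₊ / a),
        dirichletTwist s (zetaMulInv χ) b) * dirichletTwist s χ.zetaMul a‖ := by
  have hone : ∑ n ∈ Finset.Ioc 0 ⌊x⌋₊, (dirichletTwist s (zetaMulInv χ) *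
      dirichletTwist s χ.zetaMul) n = 1 := by
    rw [← dirichletTwist_mul, zetaMulInv_mul_zetaMul, dirichletTwist_one]
    simp [one_apply, hx]
  have hlt : ⌊x⌋₊ < (⌊Y⌋₊ + 1) * (⌊x / Y⌋₊ + 1) := by
    simpa only [mul_div_cancel₀ x hY.ne'] using
      floor_mul_lt hY.le (div_nonneg (zero_le_one.trans hx) hY.le)
  rw [sum_Ioc_mul_eq_hyperbola _ _ hlt] at hone
  rw [← norm_one (α := ℂ), ← hone]
  exact norm_add_le _ _

section Zero

variable {D : ℕ} [NeZero D] {χ : DirichletCharacter ℂ D}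

lemma sum_norm_zetaMul_mul_inv_sqrt_le (hχ : χ ≠ 1) (hχ2 : χ ^ 2 = 1) {z : ℝ} (hz : D ≤ z) :
    ∑ n ∈ Finset.Ioc 0 ⌊z⌋₊, ‖χ.zetaMul n‖ * (n : ℝ) ^ (-(1 / 2) : ℝ) ≤
      √D * (1 + Real.log D) ^ 2 +
        (2 + Real.log z) * (‖DirichletCharacter.LFunction χ 1‖ * √z + 3 * √D) := by
  have hhalf : (1 - 1 / 2 : ℝ) = 1 / 2 := by norm_num
  have hhead := sum_norm_zetaMul_mul_rpow_neg_le χ (σ := 1 / 2) (by norm_num)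
    (Nat.one_le_cast.2 (NeZero.pos D))
  have htail := sum_Ioc_norm_zetaMul_mul_rpow_neg_le hχ hχ2 le_rfl (by norm_num) le_rfl hz
  rw [hhalf, ← Real.sqrt_eq_rpow] at hhead htail
  rw [sub_self, Real.rpow_zero, mul_one] at htail
  rw [← Finset.sum_Ioc_consecutive _ (Nat.zero_le _) (Nat.floor_le_floor hz)]
  exact add_le_add hhead htail

lemma norm_zetaMulInv_mul_sum_zetaMul_le (hχ : χ ≠ 1) (hχ2 : χ ^ 2 = 1) {s : ℂ}
    (hs : 0 < s.re) (hz : riemannZeta s = 0) {x : ℝ} {b : ℕ} (hb : 0 < b) (hbx : D ≤ x / b) :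
    ‖dirichletTwist s (zetaMulInv χ) b *
        ∑ a ∈ Finset.Ioc 0 (⌊x⌋₊ / b), dirichletTwist s χ.zetaMul a‖ ≤
      (‖DirichletCharacter.LFunction χ 1‖ * x ^ (1 - s.re) * (‖χ.zetaMul b‖ * (b : ℝ)⁻¹) +
        √D * x ^ (1 / 2 - s.re) * (1 + ‖s‖ * (2 + Real.log x)) *
          (‖χ.zetaMul b‖ * (b : ℝ) ^ (-(1 / 2) : ℝ))) / s.re := by
  have hb' : (0 : ℝ) < b := Nat.cast_pos.2 hb
  have hxb : 0 < x / b := (Nat.cast_pos.2 (NeZero.pos D)).trans_le hbx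
  have hx : 0 ≤ x := ((div_pos_iff_of_pos_right hb').1 hxb).le
  have hlog : Real.log (x / b) ≤ Real.log x :=
    Real.log_le_log hxb (div_le_self hx (Nat.one_le_cast.2 hb))
  have hsum := norm_sum_zetaMul_le_of_riemannZeta_eq_zero hχ hs hz hbx
  rw [Nat.floor_div_natCast] at hsum
  rw [norm_mul, norm_dirichletTwist]
  calc _ ≤ ‖χ.zetaMul b‖ * (b : ℝ) ^ (-s.re) *
        ((‖DirichletCharacter.LFunction χ 1‖ * (x / b) ^ (1 - s.re) +
          √D * (x / b) ^ (1 / 2 - s.re) * (1 + ‖s‖ * (2 + Real.log x))) / s.re) := by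
        gcongr
        · exact norm_zetaMulInv_le hχ2 b
        · refine hsum.trans ?_
          gcongr
    _ = _ := by
        rw [← Real.rpow_neg_one (b : ℝ)]
        linear_combination
          ‖χ.zetaMul b‖ * ‖DirichletCharacter.LFunction χ 1‖ / s.re *
            rpow_neg_mul_div_rpow hb' hx s.re 1 +
          ‖χ.zetaMul b‖ * √D * (1 + ‖s‖ * (2 + Real.log x)) / s.re *
            rpow_neg_mul_div_rpow hb' hx s.re (1 / 2)

lemma norm_sum_zetaMulInv_mul_sum_zetaMul_le (hχ : χ ≠ 1) (hχ2 : χ ^ 2 = 1) {s : ℂ}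
    (hs : 0 < s.re) (hz : riemannZeta s = 0) {x Y : ℝ} (hY : D ≤ Y) (hYx : Y ≤ x) :
    ‖∑ b ∈ Finset.Ioc 0 ⌊x / Y⌋₊, dirichletTwist s (zetaMulInv χ) b *
        ∑ a ∈ Finset.Ioc 0 (⌊x⌋₊ / b), dirichletTwist s χ.zetaMul a‖ ≤
      (‖DirichletCharacter.LFunction χ 1‖ * x ^ (1 - s.re) * (1 + Real.log x) ^ 2 +
        √D * x ^ (1 / 2 - s.re) * (1 + ‖s‖ * (2 + Real.log x)) *
          ∑ b ∈ Finset.Ioc 0 ⌊x / Y⌋₊, ‖χ.zetaMul b‖ * (b : ℝ) ^ (-(1 / 2) : ℝ)) / s.re := by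
  have hY1 : 1 ≤ Y := (Nat.one_le_cast.2 (NeZero.pos D)).trans hY
  have hx0 : 0 < x := by linarith
  have hz1 : 1 ≤ x / Y := (one_le_div (by linarith)).2 hYx
  refine (norm_sum_le_of_le _ fun b hb ↦
    norm_zetaMulInv_mul_sum_zetaMul_le hχ hχ2 hs hz (Finset.mem_Ioc.1 hb).1
      (hY.trans (le_div_of_mem_Ioc_floor_div (by linarith) hb))).trans ?_
  rw [← Finset.sum_div, Finset.sum_add_distrib, ← Finset.mul_sum, ← Finset.mul_sum]
  gcongr
  refine (sum_norm_zetaMul_mul_inv_le χ hz1).trans ?_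
  have hlog := Real.log_nonneg hz1
  gcongr
  exact div_le_self hx0.le hY1

lemma norm_sum_Ioc_zetaMulInv_le (hχ : χ ≠ 1) (hχ2 : χ ^ 2 = 1) {s : ℂ} (hs : 1 / 2 ≤ s.re)
    (hs1 : s.re ≤ 1) {z X : ℝ} (hz : D ≤ z) (hzX : z ≤ X) :
    ‖∑ b ∈ Finset.Ioc ⌊z⌋₊ ⌊X⌋₊, dirichletTwist s (zetaMulInv χ) b‖ ≤
      (2 + Real.log X) * (‖DirichletCharacter.LFunction χ 1‖ * X ^ (1 - s.re) +
        3 * √D * z ^ (1 / 2 - s.re)) := by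
  refine (norm_sum_le_of_le _ fun b _ ↦ ?_).trans
    (sum_Ioc_norm_zetaMul_mul_rpow_neg_le hχ hχ2 hs hs1 hz hzX)
  rw [norm_dirichletTwist]
  exact mul_le_mul_of_nonneg_right (norm_zetaMulInv_le hχ2 b) (by positivity)

lemma norm_sum_zetaMulInv_mul_zetaMul_le (hχ : χ ≠ 1) (hχ2 : χ ^ 2 = 1) {s : ℂ}
    (hs : 1 / 2 ≤ s.re) (hs1 : s.re ≤ 1) {x z : ℝ} (hz : D ≤ z) {a : ℕ} (ha : 0 < a)
    (hzx : z ≤ x / a) :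
    ‖(∑ b ∈ Finset.Ioc ⌊z⌋₊ (⌊x⌋₊ / a), dirichletTwist s (zetaMulInv χ) b) *
        dirichletTwist s χ.zetaMul a‖ ≤
      (2 + Real.log x) *
        (‖DirichletCharacter.LFunction χ 1‖ * x ^ (1 - s.re) * (‖χ.zetaMul a‖ * (a : ℝ)⁻¹) +
          3 * √D * z ^ (1 / 2 - s.re) * (‖χ.zetaMul a‖ * (a : ℝ) ^ (-s.re))) := by
  have ha' : (0 : ℝ) < a := Nat.cast_pos.2 ha
  have hz0 : 0 < z := (Nat.cast_pos.2 (NeZero.pos D)).trans_le hz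
  have hxa : 0 < x / a := hz0.trans_le hzx
  have hx : 0 ≤ x := ((div_pos_iff_of_pos_right ha').1 hxa).le
  have hlog : Real.log (x / a) ≤ Real.log x :=
    Real.log_le_log hxa (div_le_self hx (Nat.one_le_cast.2 ha))
  rw [norm_mul, norm_dirichletTwist, ← Nat.floor_div_natCast]
  calc _ ≤ (2 + Real.log x) * (‖DirichletCharacter.LFunction χ 1‖ * (x / a) ^ (1 - s.re) +
        3 * √D * z ^ (1 / 2 - s.re)) * (‖χ.zetaMul a‖ * (a : ℝ) ^ (-s.re)) := by
        gcongr
        refine (norm_sum_Ioc_zetaMulInv_le hχ hχ2 hs hs1 hz hzx).trans ?_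
        gcongr
    _ = _ := by
        rw [← Real.rpow_neg_one (a : ℝ)]
        linear_combination
          (2 + Real.log x) * ‖χ.zetaMul a‖ * ‖DirichletCharacter.LFunction χ 1‖ *
            rpow_neg_mul_div_rpow ha' hx s.re 1

lemma norm_sum_sum_zetaMulInv_mul_zetaMul_le (hχ : χ ≠ 1) (hχ2 : χ ^ 2 = 1) {s : ℂ}
    (hs : 1 / 2 ≤ s.re) (hs1 : s.re ≤ 1) {x Y : ℝ} (hY : 1 ≤ Y) (hx : D * Y ≤ x) :
    ‖∑ a ∈ Finset.Ioc 0 ⌊Y⌋₊, (∑ b ∈ Finset.Ioc ⌊x / Y⌋₊ (⌊x⌋₊ / a),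
        dirichletTwist s (zetaMulInv χ) b) * dirichletTwist s χ.zetaMul a‖ ≤
      (2 + Real.log x) * (1 + Real.log Y) ^ 2 *
        (‖DirichletCharacter.LFunction χ 1‖ * x ^ (1 - s.re) +
          3 * √D * √Y * x ^ (1 / 2 - s.re)) := by
  have hY0 : 0 < Y := by linarith
  have hD1 : (1 : ℝ) ≤ D := Nat.one_le_cast.2 (NeZero.pos D)
  have hx1 : 1 ≤ x := (one_le_mul_of_one_le_of_one_le hD1 hY).trans hx
  have hlog := Real.log_nonneg hx1
  have hz : D ≤ x / Y := (le_div_iff₀ hY0).2 hx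
  have hscale : (x / Y) ^ (1 / 2 - s.re) * Y ^ (1 - s.re) = √Y * x ^ (1 / 2 - s.re) := by
    rw [Real.div_rpow (by linarith) hY0.le, Real.sqrt_eq_rpow, div_mul_eq_mul_div, mul_div_assoc,
      ← Real.rpow_sub hY0, mul_comm]
    congr 2
    ring
  have haY {a : ℕ} (ha : a ∈ Finset.Ioc 0 ⌊Y⌋₊) : x / Y ≤ x / a := by
    obtain ⟨ha0, haY⟩ := Finset.mem_Ioc.1 ha
    gcongr
    exact (Nat.le_floor_iff' ha0.ne').1 haY
  refine (norm_sum_le_of_le _ fun a ha ↦ norm_sum_zetaMulInv_mul_zetaMul_le hχ hχ2 hs hs1 hz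
    (Finset.mem_Ioc.1 ha).1 (haY ha)).trans ?_
  rw [← Finset.mul_sum, Finset.sum_add_distrib, ← Finset.mul_sum, ← Finset.mul_sum]
  calc _ ≤ (2 + Real.log x) * (‖DirichletCharacter.LFunction χ 1‖ * x ^ (1 - s.re) *
        (1 + Real.log Y) ^ 2 + 3 * √D * (x / Y) ^ (1 / 2 - s.re) *
          (Y ^ (1 - s.re) * (1 + Real.log Y) ^ 2)) := by
        gcongr
        · exact sum_norm_zetaMul_mul_inv_le χ hY
        · exact sum_norm_zetaMul_mul_rpow_neg_le χ hs1 hY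
    _ = _ := by
        linear_combination (2 + Real.log x) * 3 * √D * (1 + Real.log Y) ^ 2 * hscale

end Zero

/-! ### The inequality at a zero of `ζ` -/

lemma sqrt_four_mul_sq_mul {N : ℝ} (hN : 0 ≤ N) (D : ℝ) : √(4 * N ^ 2 * D) = 2 * N * √D := by
  rw [show 4 * N ^ 2 * D = (2 * N) ^ 2 * D by ring, Real.sqrt_mul (by positivity),
    Real.sqrt_sq (by positivity)]

lemma rpow_half_sub_mul_sqrt_div {x : ℝ} (hx : 0 < x) (Y σ : ℝ) :
    x ^ (1 / 2 - σ) * √(x / Y) = x ^ (1 - σ) / √Y := by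
  rw [Real.sqrt_div hx.le, mul_div_assoc', Real.sqrt_eq_rpow x, ← Real.rpow_add hx]
  congr 2
  ring

lemma one_add_mul_div_le {σ N u : ℝ} (hσ : 7 / 8 ≤ σ) (hN : σ ≤ N) (hu : 2 ≤ u) :
    (1 + N * u) / σ ≤ 2 * N * u := by
  have hNu : 7 / 8 * 2 ≤ N * u :=
    mul_le_mul (hσ.trans hN) hu zero_le_two (by linarith)
  have hσNu : 7 / 8 * (N * u) ≤ σ * (N * u) := by gcongr
  rw [div_le_iff₀ (by linarith)]
  linarith

section Zero

variable {D : ℕ} [NeZero D] {χ : DirichletCharacter ℂ D} {s : ℂ}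

lemma natCast_le_four_mul_norm_sq_mul (D : ℕ) (hs : 7 / 8 ≤ s.re) :
    (D : ℝ) ≤ 4 * ‖s‖ ^ 2 * D := by
  have hN : (7 / 8) ^ 2 ≤ ‖s‖ ^ 2 := by gcongr; exact hs.trans (re_le_norm s)
  exact le_mul_of_one_le_left (Nat.cast_nonneg D) (by linarith)

lemma rpow_mul_sum_norm_zetaMul_mul_inv_sqrt_le (hχ : χ ≠ 1) (hχ2 : χ ^ 2 = 1)
    (hs : 7 / 8 ≤ s.re) {x : ℝ} (hx : D * (4 * ‖s‖ ^ 2 * D) ≤ x) :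
    √D * x ^ (1 / 2 - s.re) * (2 * ‖s‖ * ∑ b ∈ Finset.Ioc 0 ⌊x / (4 * ‖s‖ ^ 2 * D)⌋₊,
        ‖χ.zetaMul b‖ * (b : ℝ) ^ (-(1 / 2) : ℝ)) ≤
      (2 + Real.log x) * (‖DirichletCharacter.LFunction χ 1‖ * x ^ (1 - s.re)) +
        2 * (‖s‖ * D * x ^ (1 / 2 - s.re)) *
          ((1 + Real.log (4 * ‖s‖ ^ 2 * D)) ^ 2 + 3 * (2 + Real.log x)) := by
  have hD1 : (1 : ℝ) ≤ D := Nat.one_le_cast.2 (NeZero.pos D)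
  have hDY := natCast_le_four_mul_norm_sq_mul D hs
  have hN : 0 < ‖s‖ := by linarith [re_le_norm s]
  set Y := 4 * ‖s‖ ^ 2 * (D : ℝ)
  have hY1 : 1 ≤ Y := hD1.trans hDY
  have hx0 : 0 < x := (by positivity : 0 < D * Y).trans_le hx
  have hDz : D ≤ x / Y := (le_div_iff₀ (by positivity)).2 hx
  have := Real.log_nonneg hD1
  calc _ ≤ √D * x ^ (1 / 2 - s.re) * (2 * ‖s‖ * (√D * (1 + Real.log Y) ^ 2 +
        (2 + Real.log x) * (‖DirichletCharacter.LFunction χ 1‖ * √(x / Y) + 3 * √D))) := by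
        gcongr
        refine (sum_norm_zetaMul_mul_inv_sqrt_le hχ hχ2 hDz).trans ?_
        gcongr
        exact div_le_self hx0.le hY1
    _ = (2 + Real.log x) * ‖DirichletCharacter.LFunction χ 1‖ * (2 * ‖s‖ * √D) *
          (x ^ (1 / 2 - s.re) * √(x / Y)) +
        2 * (‖s‖ * (√D * √D) * x ^ (1 / 2 - s.re)) *
          ((1 + Real.log Y) ^ 2 + 3 * (2 + Real.log x)) := by ring
    _ = _ := by
        rw [rpow_half_sub_mul_sqrt_div hx0, sqrt_four_mul_sq_mul hN.le,
          Real.mul_self_sqrt (by simp)]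
        field_simp

lemma norm_sum_zetaMulInv_mul_sum_zetaMul_le_of_seven_eighths_le (hχ : χ ≠ 1) (hχ2 : χ ^ 2 = 1)
    (hs : 7 / 8 ≤ s.re) (hz : riemannZeta s = 0) {x : ℝ} (hx : D * (4 * ‖s‖ ^ 2 * D) ≤ x) :
    ‖∑ b ∈ Finset.Ioc 0 ⌊x / (4 * ‖s‖ ^ 2 * D)⌋₊, dirichletTwist s (zetaMulInv χ) b *
        ∑ a ∈ Finset.Ioc 0 (⌊x⌋₊ / b), dirichletTwist s χ.zetaMul a‖ ≤
      3 * (2 + Real.log x) ^ 2 * (‖DirichletCharacter.LFunction χ 1‖ * x ^ (1 - s.re)) +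
        2 * (2 + Real.log x) * (‖s‖ * D * x ^ (1 / 2 - s.re)) *
          ((1 + Real.log (4 * ‖s‖ ^ 2 * D)) ^ 2 + 3 * (2 + Real.log x)) := by
  have hD1 : (1 : ℝ) ≤ D := Nat.one_le_cast.2 (NeZero.pos D)
  have hDY := natCast_le_four_mul_norm_sq_mul D hs
  have hsum := rpow_mul_sum_norm_zetaMul_mul_inv_sqrt_le hχ hχ2 hs hx
  set Y := 4 * ‖s‖ ^ 2 * (D : ℝ)
  have hY1 : 1 ≤ Y := hD1.trans hDY
  have hYx : Y ≤ x := (le_mul_of_one_le_left (by positivity) hD1).trans hx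
  have hlog : 0 ≤ Real.log x := Real.log_nonneg (hY1.trans hYx)
  have hx0 : 0 < x := by linarith
  set P := ‖DirichletCharacter.LFunction χ 1‖ * x ^ (1 - s.re)
  set S := ∑ b ∈ Finset.Ioc 0 ⌊x / Y⌋₊, ‖χ.zetaMul b‖ * (b : ℝ) ^ (-(1 / 2) : ℝ)
  have hinv : s.re⁻¹ ≤ 2 := inv_le_of_inv_le₀ (by norm_num) (by linarith)
  calc _ ≤ (P * (1 + Real.log x) ^ 2 +
        √D * x ^ (1 / 2 - s.re) * (1 + ‖s‖ * (2 + Real.log x)) * S) / s.re :=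
        norm_sum_zetaMulInv_mul_sum_zetaMul_le hχ hχ2 (by linarith) hz hDY hYx
    _ = P * (1 + Real.log x) ^ 2 * s.re⁻¹ +
        √D * x ^ (1 / 2 - s.re) * ((1 + ‖s‖ * (2 + Real.log x)) / s.re * S) := by ring
    _ ≤ P * (2 + Real.log x) ^ 2 * 2 +
        √D * x ^ (1 / 2 - s.re) * (2 * ‖s‖ * (2 + Real.log x) * S) := by
        have hcoeff := one_add_mul_div_le hs (re_le_norm s) (by linarith : 2 ≤ 2 + Real.log x)
        gcongr
        norm_num
    _ ≤ _ := by
        linarith [mul_le_mul_of_nonneg_left hsum (by linarith : 0 ≤ 2 + Real.log x)]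

lemma one_le_of_riemannZeta_eq_zero (hχ : χ ≠ 1) (hχ2 : χ ^ 2 = 1) (hs : 7 / 8 ≤ s.re)
    (hz : riemannZeta s = 0) {x : ℝ} (hx : D * (4 * ‖s‖ ^ 2 * D) ≤ x) :
    1 ≤ ‖DirichletCharacter.LFunction χ 1‖ * x ^ (1 - s.re) *
        (3 * (2 + Real.log x) ^ 2 +
          (2 + Real.log x) * (1 + Real.log (4 * ‖s‖ ^ 2 * D)) ^ 2) +
      ‖s‖ * D * x ^ (1 / 2 - s.re) *
        (6 * (2 + Real.log x) ^ 2 +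
          8 * (2 + Real.log x) * (1 + Real.log (4 * ‖s‖ ^ 2 * D)) ^ 2) := by
  have hD1 : (1 : ℝ) ≤ D := Nat.one_le_cast.2 (NeZero.pos D)
  have hY1 := hD1.trans (natCast_le_four_mul_norm_sq_mul D hs)
  have hx1 : 1 ≤ x := (one_le_mul_of_one_le_of_one_le hD1 hY1).trans hx
  have hT₂ := norm_sum_sum_zetaMulInv_mul_zetaMul_le hχ hχ2 (by linarith)
    (re_lt_one_of_riemannZeta_eq_zero hz).le hY1 hx
  rw [sqrt_four_mul_sq_mul (norm_nonneg s), show 3 * √D * (2 * ‖s‖ * √D) =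
    6 * ‖s‖ * (√D * √D) by ring, Real.mul_self_sqrt (by simp)] at hT₂
  calc 1 ≤ _ := one_le_norm_sum_zetaMulInv_add_norm_sum_zetaMul χ s hx1 (by linarith)
    _ ≤ _ := add_le_add
        (norm_sum_zetaMulInv_mul_sum_zetaMul_le_of_seven_eighths_le hχ hχ2 hs hz hx) hT₂
    _ = _ := by ring

end Zero

/-! ### Numerical estimates -/

lemma log_pow_three_le {U : ℝ} (hU : 1 ≤ U) : Real.log U ^ 3 ≤ 27 * √U := by
  have hU0 : 0 < U := by linarith
  have hlog : Real.log U ≤ 3 * U ^ (1 / 6 : ℝ) := by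
    have hexp : U ^ (1 / 6 : ℝ) = Real.exp (Real.log U / 6) := by
      rw [Real.rpow_def_of_pos hU0, div_eq_mul_one_div (Real.log U)]
    have h := Real.exp_one_mul_le_exp (x := Real.log U / 6)
    rw [hexp]
    nlinarith [Real.exp_one_gt_two, Real.log_nonneg hU]
  calc Real.log U ^ 3 ≤ (3 * U ^ (1 / 6 : ℝ)) ^ 3 := by
        have := Real.log_nonneg hU
        gcongr
    _ = 27 * √U := by
        rw [mul_pow, ← Real.rpow_mul_natCast hU0.le, Real.sqrt_eq_rpow]
        norm_num

lemma two_le_log {U : ℝ} (hU : 9 ≤ U) : 2 ≤ Real.log U := by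
  rw [Real.le_log_iff_exp_le (by linarith), show (2 : ℝ) = (2 : ℕ) * 1 by norm_num,
    Real.exp_nat_mul]
  calc Real.exp 1 ^ 2 ≤ 3 ^ 2 := by gcongr; exact Real.exp_one_lt_three.le
    _ ≤ U := by linarith

lemma rpow_half_sub_mul_log_pow_three_le {U σ : ℝ} (hU : 1 ≤ U) (hσ : 7 / 8 ≤ σ) :
    (U ^ 12) ^ (1 / 2 - σ) * Real.log U ^ 3 ≤ 27 / U ^ 4 := by
  have hU0 : 0 < U := by linarith
  calc (U ^ 12) ^ (1 / 2 - σ) * Real.log U ^ 3 ≤ (U ^ 12) ^ (-(3 / 8) : ℝ) * (27 * √U) := by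
        have := Real.log_nonneg hU
        gcongr
        · exact one_le_pow₀ hU
        · linarith
        · exact log_pow_three_le hU
    _ = 27 * (U ^ (-(9 / 2) : ℝ) * U ^ (1 / 2 : ℝ)) := by
        rw [← Real.rpow_natCast_mul hU0.le, Real.sqrt_eq_rpow]
        norm_num
        ring
    _ = 27 * U ^ (-(4 : ℕ) : ℝ) := by
        rw [← Real.rpow_add hU0]
        norm_num
    _ = 27 / U ^ 4 := by rw [Real.rpow_neg hU0.le, Real.rpow_natCast, div_eq_mul_inv]

section Scale

variable {N D U : ℝ} (hN : 7 / 8 ≤ N) (hD : 10 ^ 9 ≤ D)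
  (hU : U = N * D ^ ((1 : ℝ) / 4) * Real.log D)

include hD

lemma twenty_le_log : 20 ≤ Real.log D := by
  rw [Real.le_log_iff_exp_le (by linarith), show (20 : ℝ) = (20 : ℕ) * 1 by norm_num,
    Real.exp_nat_mul]
  calc Real.exp 1 ^ 20 ≤ 2.7182818286 ^ 20 := by gcongr; exact Real.exp_one_lt_d9.le
    _ ≤ 10 ^ 9 := by norm_num
    _ ≤ D := hD

include hU

lemma pow_four_eq_of_eq_mul_rpow : U ^ 4 = N ^ 4 * D * Real.log D ^ 4 := by
  rw [hU, mul_pow, mul_pow, ← Real.rpow_mul_natCast (by linarith)]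
  norm_num

include hN

lemma nine_le_of_eq_mul_rpow : 9 ≤ U := by
  have hlog := twenty_le_log hD
  have hroot : 1 ≤ D ^ ((1 : ℝ) / 4) := Real.one_le_rpow (by linarith) (by norm_num)
  calc (9 : ℝ) ≤ 7 / 8 * 1 * 20 := by norm_num
    _ ≤ U := by rw [hU]; gcongr

lemma mul_mul_le_pow_four : 100000 * (N * D) ≤ U ^ 4 := by
  rw [pow_four_eq_of_eq_mul_rpow hD hU]
  calc 100000 * (N * D) ≤ (7 / 8) ^ 3 * 20 ^ 4 * (N * D) := by
        have : 0 ≤ D := by linarith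
        gcongr
        norm_num
    _ ≤ N ^ 3 * Real.log D ^ 4 * (N * D) := by
        have : 0 ≤ D := by linarith
        gcongr
        exact twenty_le_log hD
    _ = N ^ 4 * D * Real.log D ^ 4 := by ring

lemma four_mul_sq_mul_le_pow_four : 4 * N ^ 2 * D ≤ U ^ 4 := by
  rw [pow_four_eq_of_eq_mul_rpow hD hU]
  calc 4 * N ^ 2 * D ≤ (7 / 8) ^ 2 * 20 ^ 4 * (N ^ 2 * D) := by
        have : 0 ≤ N ^ 2 * D := by positivity
        linarith
    _ ≤ N ^ 2 * Real.log D ^ 4 * (N ^ 2 * D) := by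
        gcongr
        exact twenty_le_log hD
    _ = N ^ 4 * D * Real.log D ^ 4 := by ring

lemma mul_four_mul_sq_mul_le_pow_twelve : D * (4 * N ^ 2 * D) ≤ U ^ 12 := by
  have hU1 := (by norm_num : (1 : ℝ) ≤ 9).trans (nine_le_of_eq_mul_rpow hN hD hU)
  calc D * (4 * N ^ 2 * D) ≤ U ^ 4 * U ^ 4 := by
        have := mul_mul_le_pow_four hN hD hU
        gcongr
        · nlinarith
        · exact four_mul_sq_mul_le_pow_four hN hD hU
    _ = U ^ 8 := by ring
    _ ≤ U ^ 12 := pow_le_pow_right₀ hU1 (by norm_num)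

lemma mul_rpow_half_sub_mul_log_pow_three_le {σ : ℝ} (hσ : 7 / 8 ≤ σ) :
    N * D * (U ^ 12) ^ (1 / 2 - σ) * Real.log U ^ 3 ≤ 27 / 100000 := by
  have hU9 := nine_le_of_eq_mul_rpow hN hD hU
  calc N * D * (U ^ 12) ^ (1 / 2 - σ) * Real.log U ^ 3
      = N * D * ((U ^ 12) ^ (1 / 2 - σ) * Real.log U ^ 3) := by ring
    _ ≤ N * D * (27 / U ^ 4) := by
        have : 0 ≤ D := by linarith
        gcongr
        exact rpow_half_sub_mul_log_pow_three_le (by linarith) hσ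
    _ ≤ 27 / 100000 := by
        rw [mul_div_assoc', div_le_div_iff₀ (by positivity) (by norm_num)]
        linarith [mul_mul_le_pow_four hN hD hU]

lemma one_add_log_four_mul_sq_mul_le : 1 + Real.log (4 * N ^ 2 * D) ≤ 5 * Real.log U := by
  have hl := two_le_log (nine_le_of_eq_mul_rpow hN hD hU)
  have hlog := Real.log_le_log (by positivity) (four_mul_sq_mul_le_pow_four hN hD hU)
  rw [Real.log_pow] at hlog
  push_cast at hlog
  linarith

end Scale

lemma three_mul_sq_add_lt_one {P Q u v l : ℝ} (hP : 0 ≤ P) (hQ : 0 ≤ Q) (hl : 2 ≤ l)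
    (hu0 : 0 ≤ u) (hu : u ≤ 13 * l) (hv0 : 0 ≤ v) (hv : v ≤ 5 * l)
    (hPl : P * l ^ 3 ≤ 1 / 5400) (hQl : Q * l ^ 3 ≤ 27 / 100000) :
    P * (3 * u ^ 2 + u * v ^ 2) + Q * (6 * u ^ 2 + 8 * u * v ^ 2) < 1 := by
  have hu2 : u ^ 2 ≤ 85 * l ^ 3 := by
    calc u ^ 2 ≤ (13 * l) ^ 2 := by gcongr
      _ = 169 / 2 * (2 * l ^ 2) := by ring
      _ ≤ 85 * (l * l ^ 2) := by gcongr; norm_num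
      _ = 85 * l ^ 3 := by ring
  have huv : u * v ^ 2 ≤ 325 * l ^ 3 := by
    calc u * v ^ 2 ≤ 13 * l * (5 * l) ^ 2 := by gcongr
      _ = 325 * l ^ 3 := by ring
  calc P * (3 * u ^ 2 + u * v ^ 2) + Q * (6 * u ^ 2 + 8 * u * v ^ 2)
      = P * (3 * u ^ 2 + u * v ^ 2) + Q * (6 * u ^ 2 + 8 * (u * v ^ 2)) := by ring
    _ ≤ P * (3 * (85 * l ^ 3) + 325 * l ^ 3) + Q * (6 * (85 * l ^ 3) + 8 * (325 * l ^ 3)) := by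
        gcongr
    _ = 580 * (P * l ^ 3) + 3110 * (Q * l ^ 3) := by ring
    _ < 1 := by linarith

section Real

variable {D : ℕ} [NeZero D] {χ : DirichletCharacter ℂ D}

lemma sq_eq_one_of_forall_natCast_im_eq_zero (hreal : ∀ n : ℕ, (χ n).im = 0) :
    χ ^ 2 = 1 := by
  ext a
  obtain ⟨n, ha⟩ := ZMod.natCast_zmod_surjective (a : ZMod D)
  have hconj : (starRingEnd ℂ) (χ a) = χ a := by rw [← ha, conj_eq_iff_im, hreal]
  rw [MulChar.pow_apply_coe, MulChar.one_apply_coe, sq]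
  nth_rewrite 2 [← hconj]
  rw [mul_conj', χ.unit_norm_eq_one, ofReal_one, one_pow]

lemma ne_one_of_isPrimitive (hprim : χ.IsPrimitive) (hD : D ≠ 1) : χ ≠ 1 := by
  rintro rfl
  rw [DirichletCharacter.IsPrimitive, DirichletCharacter.conductor_one] at hprim
  exact hD hprim.symm

end Real

theorem stmt0_general {D : ℕ} [NeZero D] {χ : DirichletCharacter ℂ D} (hχ : χ ≠ 1)
    (hχ2 : χ ^ 2 = 1) {ρ : ℂ} (hzero : riemannZeta ρ = 0) (hβ : 7 / 8 ≤ ρ.re) (hD : 10 ^ 9 ≤ D)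
    {U : ℝ} (hU : U = ‖ρ‖ * (D : ℝ) ^ ((1 : ℝ) / 4) * Real.log D) :
    1 / (5400 * U ^ (12 * (1 - ρ.re)) * Real.log U ^ 3) <
      (DirichletCharacter.LFunction χ 1).re := by
  have hN : 7 / 8 ≤ ‖ρ‖ := hβ.trans (re_le_norm ρ)
  have hD' : (10 : ℝ) ^ 9 ≤ D := mod_cast hD
  have hU9 := nine_le_of_eq_mul_rpow hN hD' hU
  have hl := two_le_log hU9
  have hlog : Real.log (U ^ 12) = 12 * Real.log U := by
    rw [Real.log_pow]
    norm_num
  have := Real.log_nonneg ((Nat.one_le_cast.2 (NeZero.pos D)).trans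
    (natCast_le_four_mul_norm_sq_mul D hβ))
  have hQ := mul_rpow_half_sub_mul_log_pow_three_le hN hD' hU hβ
  rw [re_eq_norm.2 (LFunction_one_nonneg hχ hχ2)]
  by_contra! hle
  have hP : ‖DirichletCharacter.LFunction χ 1‖ * (U ^ 12) ^ (1 - ρ.re) * Real.log U ^ 3 ≤
      1 / 5400 := by
    rw [← Real.rpow_natCast_mul (by linarith)]
    rw [le_div_iff₀ (by positivity)] at hle
    push_cast
    linarith
  exact (one_le_of_riemannZeta_eq_zero hχ hχ2 hβ hzero
    (mul_four_mul_sq_mul_le_pow_twelve hN hD' hU)).not_gt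
    (three_mul_sq_add_lt_one (by positivity) (by positivity) hl (by linarith) (by linarith)
      (by linarith) (one_add_log_four_mul_sq_mul_le hN hD' hU) hP hQ)

/-- **Elementary Deuring-Heilbronn phenomenon** (Stopple, Theorem 1).
A zero `ρ = β + iγ` of the Riemann zeta function with `β > 7/8` (and `γ log 2` not too
close to a multiple of `2π`) forces a lower bound on `L(1,χ)` for every real primitive
Dirichlet character `χ` of modulus `D ≡ 0 (mod 4)`, `D > 10^9`, where
`U = |ρ| D^(1/4) log D`. -/
theorem stmt0 (β γ : ℝ) (ρ : ℂ) (hρ : ρ = β + γ * I)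
    (hzero : riemannZeta ρ = 0) (hβ : 7 / 8 < β)
    (δ : ℝ) (hδ1 : -Real.pi < δ) (hδ2 : δ ≤ Real.pi)
    (hδ3 : ∃ n : ℤ, γ * Real.log 2 = 2 * Real.pi * n + δ)
    (hδ4 : Real.pi / 100 < |δ|)
    (D : ℕ) [NeZero D] (χ : DirichletCharacter ℂ D)
    (hreal : ∀ n : ℕ, (χ n).im = 0) (hprim : χ.IsPrimitive)
    (hD4 : D % 4 = 0) (hD : 10 ^ 9 < D)
    (U : ℝ) (hU : U = ‖ρ‖ * (D : ℝ) ^ ((1 : ℝ) / 4) * Real.log D) :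
    1 / (5400 * U ^ (12 * (1 - β)) * Real.log U ^ 3) <
      (DirichletCharacter.LFunction χ 1).re := by
  subst hρ
  have hre : (β + γ * I : ℂ).re = β := by simp
  have h := stmt0_general (ne_one_of_isPrimitive hprim (by omega))
    (sq_eq_one_of_forall_natCast_im_eq_zero hreal) hzero (hβ.le.trans_eq hre.symm) hD.le hU
  rwa [hre] at h
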